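/- arXiv:2402.02458 — 2 statements merged into one kernel-verified Lean document; each statement's English description precedes it below -/
import Mathlib

section
/- Let n and k be positive integers with k ≡ 1 (mod 3), k ≥ 4 and n ≥ k+3, and let G be a potted graph of order n whose cycle has length k. Set y₁ = (1/18)(k+2)(k+5)·3^{(n−k)/3} + (1/9)(n+5)(k−1), y₂ = (1/18)k(k+5)·3^{(n−k)/3} + (1/3)(k−1) + (1/18)(k+2)(k+5)·((n−k)/3 + 1), y₃ = (1/18)k(k+5)·3^{(n−k−1)/3} + (1/18)(k+2)(k+5) and y₄ = (1/18)(k+2)(k+5)·3^{(n−k−1)/3} + (1/3)(k−1). Then: if n ≡ 0 (mod 3), m(G) ≤ (1/18)(k+2)(k+5)·3^{(n−k−2)/3}; if n ≡ 1 (mod 3), m(G) ≤ max{y₁, y₂}; if n ≡ 2 (mod 3), m(G) ≤ max{y₃, y₄}. -/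
open scoped Classical

variable {V : Type*}

/-- The number of neighbors of `v` that lie inside the finite set `s`,
i.e. the degree of `v` in the subgraph induced by `s` (when `v ∈ s`). -/
noncomputable def nbrCount (G : SimpleGraph V) (s : Finset V) (v : V) : ℕ :=
  {w ∈ (s : Set V) | G.Adj v w}.ncard

/-- `s` is a dissociation set of `G`: the subgraph induced by `s` has maximum degree at most 1. -/
def IsDissoc (G : SimpleGraph V) (s : Finset V) : Prop :=
  ∀ v ∈ s, nbrCount G s v ≤ 1

/-- The dissociation number of the subgraph of `G` induced by `A`. -/
noncomputable def dissNumOn (G : SimpleGraph V) (A : Set V) : ℕ :=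
  sSup {n | ∃ s : Finset V, ↑s ⊆ A ∧ IsDissoc G s ∧ s.card = n}

/-- `s` is a maximum dissociation set of the subgraph of `G` induced by `A`. -/
def IsMaxDissocOn (G : SimpleGraph V) (A : Set V) (s : Finset V) : Prop :=
  ↑s ⊆ A ∧ IsDissoc G s ∧ s.card = dissNumOn G A

/-- The number of maximum dissociation sets of the subgraph of `G` induced by `A`. -/
noncomputable def numMaxDissocOn (G : SimpleGraph V) (A : Set V) : ℕ :=
  Nat.card {s : Finset V // IsMaxDissocOn G A s}

/-- The dissociation number of `G`. -/
noncomputable def dissNum (G : SimpleGraph V) : ℕ :=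
  dissNumOn G Set.univ

/-- `s` is a maximum dissociation set of `G`. -/
def IsMaxDissoc (G : SimpleGraph V) (s : Finset V) : Prop :=
  IsMaxDissocOn G Set.univ s

/-- The number `m(G)` of maximum dissociation sets of `G`. -/
noncomputable def numMaxDissoc (G : SimpleGraph V) : ℕ :=
  numMaxDissocOn G Set.univ

/-- `m(G[A], u⁻)`: maximum dissociation sets of `G[A]` not containing `u`. -/
noncomputable def numMaxDissocOnAway (G : SimpleGraph V) (A : Set V) (u : V) : ℕ :=
  Nat.card {s : Finset V // IsMaxDissocOn G A s ∧ u ∉ s}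

/-- `m(G[A], u⁰)`: maximum dissociation sets of `G[A]` containing `u` with induced degree 0. -/
noncomputable def numMaxDissocOnDeg0 (G : SimpleGraph V) (A : Set V) (u : V) : ℕ :=
  Nat.card {s : Finset V // IsMaxDissocOn G A s ∧ u ∈ s ∧ nbrCount G s u = 0}

/-- `m(G[A], u¹)`: maximum dissociation sets of `G[A]` containing `u` with induced degree 1. -/
noncomputable def numMaxDissocOnDeg1 (G : SimpleGraph V) (A : Set V) (u : V) : ℕ :=
  Nat.card {s : Finset V // IsMaxDissocOn G A s ∧ u ∈ s ∧ nbrCount G s u = 1}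

/-- `m(G, u⁻)`. -/
noncomputable def numMaxDissocAway (G : SimpleGraph V) (u : V) : ℕ :=
  numMaxDissocOnAway G Set.univ u

/-- `m(G, u⁰)`. -/
noncomputable def numMaxDissocDeg0 (G : SimpleGraph V) (u : V) : ℕ :=
  numMaxDissocOnDeg0 G Set.univ u

/-- `m(G, u¹)`. -/
noncomputable def numMaxDissocDeg1 (G : SimpleGraph V) (u : V) : ℕ :=
  numMaxDissocOnDeg1 G Set.univ u

/-- `m̄`: relative count, `numMaxDissocOn G B` if `dissNumOn G B = dissNumOn G A`, else 0. -/
noncomputable def mbar (G : SimpleGraph V) (A B : Set V) : ℕ :=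
  if dissNumOn G B = dissNumOn G A then numMaxDissocOn G B else 0

/-- `G` is a potted graph whose (unique) cycle has length `k`: `G` is connected and unicyclic
(equivalently, connected with as many edges as vertices), and its cycle has length `k` and
contains a unique vertex of degree larger than 2. -/
def IsPotted (G : SimpleGraph V) (k : ℕ) : Prop :=
  G.Connected ∧ G.edgeSet.ncard = Nat.card V ∧
    ∃ (v : V) (c : G.Walk v v), c.IsCycle ∧ c.length = k ∧
      ∃! u, u ∈ c.support ∧ 2 < (G.neighborSet u).ncard

/-!
Let `u` be the vertex of degree larger than 2 on the cycle. Removing the cycle leaves a forest whose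
components each contain exactly one neighbour of `u`; take these neighbours as roots. Whether `u`
lies in a dissociation set, and with which neighbour, determines how the set restricts to the forest
and to the path left of the cycle. So the number of maximum dissociation sets is the leading
coefficient of a polynomial assembled from the explicit polynomials of paths and from three
polynomials `P`, `Y`, `Z` of the forest: they count all its dissociation sets, those without roots,
and those with a single root that is isolated.

Such triples arise from the empty forest by disjoint unions and by joining all roots to a new root,
and, up to coefficients that may vanish, the pair `(deg P - deg Y, deg P - deg Z)` is one of
`(0, 0)`, `(1, 0)` and `(1, 1)`; joining a new root permutes these three patterns cyclically. For
each pattern the top coefficients of `P`, `Y` and `Z` satisfy inequalities with powers of 3 that are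
preserved by both operations, and these inequalities bound the leading coefficient of the assembled
polynomial, a linear form in them whose weights depend on the length of the cycle.
-/

/-! ## Counting arithmetic for rooted forests -/

/-- The excess over `3 ^ m` allowed for the sum of the first two counts in `HeavyRoots`. -/
def pairSlack (e : ℕ) : ℕ := if e = 0 then 1 else 0

/-- The excess over `3 ^ m` allowed for the sum of all three counts in `HeavyRoots`. -/
def tripleSlack (e m : ℕ) : ℕ := if e = 0 then m + 2 else if e = 1 then 1 else 0

/-- Bounds on the counts of a rooted forest of order `n` whose roots are *heavy*: a dissociation set
without roots, or with a single root that is isolated in it, has at most `diss - 1` elements.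
Here `x` counts the dissociation sets of size `diss`, while `u` and `v` count those of size
`diss - 1` without roots and with a single root that is isolated, respectively. -/
def HeavyRoots (n x u v : ℕ) : Prop :=
  ∃ m e, n = 3 * m + e + 2 ∧ e < 3 ∧ 1 ≤ x ∧ x ≤ 3 ^ m ∧ x + u ≤ 3 ^ m + pairSlack e ∧
    x + u + v ≤ 3 ^ m + tripleSlack e m

/-- Bounds on the counts of a rooted forest of order `n` whose roots are *light*: some dissociation
set of size `diss` has a single root, isolated in it, but none is without roots. The counts are
those of `HeavyRoots`, `z` being the number of sets of size `diss` with a single isolated root.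
Joining all roots to a new root produces a forest with heavy roots and shifts the counts. -/
def LightRoots (n x u z : ℕ) : Prop :=
  z ≤ x ∧ HeavyRoots (n + 1) z x u

/-- The counts of a rooted forest of order `n` whose roots are *free*: some dissociation set of size
`diss` avoids them. Removing the root from a component of such a forest leaves a forest whose roots,
the neighbours of the removed vertex, are heavy. -/
inductive FreeRoots : ℕ → ℕ → ℕ → ℕ → Prop
  | nil : FreeRoots 0 1 1 0
  | cons {n p q r n' x y z : ℕ} : HeavyRoots n p q r → FreeRoots n' x y z →
      FreeRoots (n + 1 + n') ((p + q + r) * x) (p * y) (p * z + q * y)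

lemma succ_le_three_pow (m : ℕ) : m + 1 ≤ 3 ^ m :=
  Nat.lt_pow_self (by norm_num)

lemma two_mul_add_one_le_three_pow (m : ℕ) : 2 * m + 1 ≤ 3 ^ m := by
  induction m with
  | zero => simp
  | succ m ih => rw [pow_succ]; omega

lemma pairSlack_le_one (e : ℕ) : pairSlack e ≤ 1 := by
  unfold pairSlack; split_ifs <;> omega

lemma pairSlack_add (e f : ℕ) : pairSlack (e + f) = pairSlack e * pairSlack f := by
  unfold pairSlack; split_ifs <;> omega

lemma pairSlack_le_tripleSlack (e m : ℕ) : pairSlack e ≤ tripleSlack e m := by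
  unfold pairSlack tripleSlack; split_ifs <;> omega

lemma tripleSlack_le (e m : ℕ) : tripleSlack e m ≤ 3 ^ m + pairSlack e := by
  have := succ_le_three_pow m
  unfold pairSlack tripleSlack; split_ifs <;> omega

lemma tripleSlack_le_two_mul (e m : ℕ) : tripleSlack e m ≤ 2 * 3 ^ m := by
  have := succ_le_three_pow m
  have := tripleSlack_le e m
  have := pairSlack_le_one e
  omega

lemma mul_tripleSlack_add_le {e f : ℕ} (hef : e + f < 3) (m a : ℕ) :
    3 ^ m * tripleSlack f a + tripleSlack e m * 3 ^ a + pairSlack e * pairSlack f ≤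
      2 * (3 ^ m * 3 ^ a) + tripleSlack (e + f) (m + a + 1) := by
  obtain ⟨N, hN⟩ := Nat.exists_eq_add_of_le (succ_le_three_pow m)
  obtain ⟨A, hA⟩ := Nat.exists_eq_add_of_le (succ_le_three_pow a)
  have he : e < 3 := by omega
  have hf : f < 3 := by omega
  rw [hN, hA]
  interval_cases e <;> interval_cases f <;>
    simp only [pairSlack, tripleSlack, reduceIte, Nat.reduceEqDiff, Nat.reduceAdd, one_ne_zero,
      OfNat.ofNat_ne_zero] at * <;> nlinarith [Nat.zero_le (m * a)]

lemma le_of_add_mul_le {x u p t N A K δ : ℕ} (hx : x ≤ N) (hu : x + u ≤ N + δ) (hp : p ≤ A)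
    (hpt : p ≤ t) (ht : t ≤ K) : t * x + p * u ≤ N * K + δ * A := by
  obtain ⟨w, rfl⟩ := Nat.exists_eq_add_of_le hpt
  calc (p + w) * x + p * u = w * x + p * (x + u) := by ring
    _ ≤ w * N + p * (N + δ) := by gcongr
    _ = N * (p + w) + δ * p := by ring
    _ ≤ N * K + δ * A := by gcongr

lemma heavyRoots_two : HeavyRoots 2 1 1 1 :=
  ⟨0, 0, by norm_num [pairSlack, tripleSlack]⟩

lemma HeavyRoots.of_le {n m e x u v : ℕ} (hn : n = 3 * m + e + 2) (he : 3 ≤ e) (hx : 1 ≤ x)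
    (h : x + u + v ≤ 3 * 3 ^ m) : HeavyRoots n x u v := by
  have hpow : 3 ^ (m + 1) ≤ 3 ^ (m + e / 3) := Nat.pow_le_pow_right (by norm_num) (by omega)
  rw [pow_succ] at hpow
  exact ⟨m + e / 3, e % 3, by omega, by omega, hx, by omega, by omega, by omega⟩

/-- The bounds of `HeavyRoots` need only be checked for `e < 3`: beyond, one extra factor `3` in the
main term absorbs all slack. -/
lemma HeavyRoots.of_cases {n m e x u v : ℕ} (hn : n = 3 * m + e + 2) (hx : 1 ≤ x)
    (hlt : e < 3 → x ≤ 3 ^ m ∧ x + u ≤ 3 ^ m + pairSlack e ∧ x + u + v ≤ 3 ^ m + tripleSlack e m)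
    (hge : 3 ≤ e → x + u + v ≤ 3 * 3 ^ m) : HeavyRoots n x u v := by
  rcases Nat.lt_or_ge e 3 with he | he
  · exact ⟨m, e, hn, he, hx, hlt he⟩
  · exact .of_le hn he hx (hge he)

section Action

variable {n p q r n' x u v z : ℕ}

/-- The three quantities bounded here are those of the forest in `HeavyRoots.cons_heavy`, with
`N = 3 ^ m` and `A = 3 ^ a`. -/
lemma sum_action_le {N A δ γ δ' γ' : ℕ} (hx : x ≤ N) (hu : x + u ≤ N + δ)
    (hv : x + u + v ≤ N + γ) (hδ : δ ≤ γ) (hp : p ≤ A) (hq : p + q ≤ A + δ')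
    (hr : p + q + r ≤ A + γ') :
    (p + q + r) * x + p * u + (p * v + q * u) ≤ N * A + N * γ' + γ * A + δ * δ' := by
  obtain ⟨g, rfl⟩ := Nat.exists_eq_add_of_le hδ
  calc (p + q + r) * x + p * u + (p * v + q * u)
      = r * x + q * (x + u) + p * (x + u + v) := by ring
    _ ≤ r * N + q * (N + δ) + p * (N + (δ + g)) := by gcongr
    _ = N * (p + q + r) + δ * (p + q) + g * p := by ring
    _ ≤ N * (A + γ') + δ * (A + δ') + g * A := by gcongr
    _ = N * A + N * γ' + (δ + g) * A + δ * δ' := by ring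

lemma mul_tripleSlack_add_pairSlack_le (m a e f : ℕ) :
    3 ^ m * (3 ^ a + tripleSlack f a) + pairSlack e * 3 ^ a ≤
      3 * (3 ^ m * 3 ^ a) + pairSlack (e + f) := by
  have hN := Nat.one_le_pow m 3 (by norm_num)
  have hA := Nat.one_le_pow a 3 (by norm_num)
  have hslack := Nat.mul_le_mul_left (3 ^ m) (tripleSlack_le f a)
  rw [pairSlack_add]
  have he := pairSlack_le_one e
  have hf := pairSlack_le_one f
  interval_cases pairSlack e <;> interval_cases pairSlack f <;> nlinarith

lemma mul_tripleSlack_add_le_of_three_le (m a : ℕ) {e f : ℕ} (hef : 3 ≤ e + f) (he : e < 3)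
    (hf : f < 3) :
    3 ^ m * tripleSlack f a + tripleSlack e m * 3 ^ a + pairSlack e * pairSlack f ≤
      2 * (3 ^ m * 3 ^ a) := by
  have hN := Nat.one_le_pow m 3 (by norm_num)
  have hA := Nat.one_le_pow a 3 (by norm_num)
  interval_cases e <;> interval_cases f <;>
    simp only [pairSlack, tripleSlack, reduceIte, Nat.reduceEqDiff, one_ne_zero,
      OfNat.ofNat_ne_zero] at * <;> nlinarith

lemma HeavyRoots.cons_heavy (h : HeavyRoots n p q r) (h' : HeavyRoots n' x u v) :
    HeavyRoots (n + 1 + n') ((p + q + r) * x) (p * u) (p * v + q * u) := by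
  obtain ⟨a, f, rfl, hf, hp0, hp, hq, hr⟩ := h
  obtain ⟨m, e, rfl, he, hx0, hx, hu, hv⟩ := h'
  have hpow : 3 ^ (m + a + 1) = 3 * (3 ^ m * 3 ^ a) := by ring
  have hpair := le_of_add_mul_le hx hu hp (by omega : p ≤ p + q + r) hr
  have htriple := sum_action_le hx hu hv (pairSlack_le_tripleSlack e m) hp hq hr
  refine .of_cases (m := m + a + 1) (e := e + f) (by omega) (Nat.mul_pos (by omega) hx0) ?_ ?_
  · intro hef
    have hsum := mul_tripleSlack_add_le hef m a
    have hroot : p + q + r ≤ 3 * 3 ^ a := hr.trans (by have := tripleSlack_le_two_mul f a; omega)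
    rw [hpow]
    refine ⟨(Nat.mul_le_mul hroot hx).trans_eq (by ring), ?_, by omega⟩
    exact hpair.trans (mul_tripleSlack_add_pairSlack_le m a e f)
  · intro hef
    have := mul_tripleSlack_add_le_of_three_le m a hef he hf
    omega

lemma HeavyRoots.cons_light (h : HeavyRoots n p q r) (h' : LightRoots n' x u z) :
    LightRoots (n + 1 + n') ((p + q + r) * x) (p * u) (p * z) := by
  obtain ⟨hzx, m, e, hn', he, hz0, hz, hu, hv⟩ := h'
  obtain ⟨a, f, rfl, hf, hp0, hp, -, hr⟩ := h
  refine ⟨Nat.mul_le_mul (by omega) hzx, ?_⟩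
  have hx : x ≤ 3 ^ m := by have := pairSlack_le_one e; omega
  have hpow : 3 ^ (m + a + 1) = 3 * (3 ^ m * 3 ^ a) := by ring
  have hpair := le_of_add_mul_le hx (by omega : x + z ≤ 3 ^ m + pairSlack e) hp
    (by omega : p ≤ p + q + r) hr
  have htriple := le_of_add_mul_le hx (by omega : x + (z + u) ≤ 3 ^ m + tripleSlack e m) hp
    (by omega : p ≤ p + q + r) hr
  have hexpand : 3 ^ m * (3 ^ a + tripleSlack f a) = 3 ^ m * 3 ^ a + 3 ^ m * tripleSlack f a :=
    mul_add ..
  rw [mul_add] at htriple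
  refine .of_cases (m := m + a + 1) (e := e + f) (by omega) (Nat.mul_pos hp0 hz0) ?_ ?_
  · intro hef
    have hsum := mul_tripleSlack_add_le hef m a
    have hfst : p * z ≤ 3 ^ m * 3 ^ a := (Nat.mul_le_mul hp hz).trans_eq (mul_comm ..)
    rw [hpow]
    refine ⟨by omega, ?_, by omega⟩
    rw [add_comm (p * z)]
    exact hpair.trans (mul_tripleSlack_add_pairSlack_le m a e f)
  · intro hef
    have := mul_tripleSlack_add_le_of_three_le m a hef he hf
    omega

end Action

lemma FreeRoots.one_le {n x y z : ℕ} (h : FreeRoots n x y z) : 1 ≤ y := by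
  induction h with
  | nil => rfl
  | cons h _ ih =>
    obtain ⟨m, e, -, -, hp, -⟩ := h
    exact Nat.mul_pos hp ih

lemma FreeRoots.mul_heavy {n x y z n' x' u' v' : ℕ} (h : FreeRoots n x y z)
    (h' : HeavyRoots n' x' u' v') :
    HeavyRoots (n + n') (x * x') (y * u') (y * v' + z * u') := by
  induction h with
  | nil => simpa using h'
  | cons h _ ih => convert h.cons_heavy ih using 1 <;> ring

lemma FreeRoots.mul_light {n x y z n' x' u' z' : ℕ} (h : FreeRoots n x y z)
    (h' : LightRoots n' x' u' z') : LightRoots (n + n') (x * x') (y * u') (y * z') := by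
  induction h with
  | nil => simpa using h'
  | cons h _ ih => convert h.cons_light ih using 1 <;> ring

lemma FreeRoots.mul_free {n x y z n' x' y' z' : ℕ} (h : FreeRoots n x y z)
    (h' : FreeRoots n' x' y' z') : FreeRoots (n + n') (x * x') (y * y') (y * z' + z * y') := by
  induction h with
  | nil => simpa using h'
  | cons h _ ih => convert FreeRoots.cons h ih using 1 <;> ring

lemma HeavyRoots.root {n x u v : ℕ} (h : HeavyRoots n x u v) :
    FreeRoots (n + 1) (x + u + v) x u := by
  simpa using FreeRoots.cons h .nil

lemma LightRoots.root {n x u z : ℕ} (h : LightRoots n x u z) : HeavyRoots (n + 1) z x u :=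
  h.2

section FreeBounds

variable {m a e f p q r x y z : ℕ}

lemma pair_product_le (hp : p ≤ 3 ^ a) (hq : p + q ≤ 3 ^ a + pairSlack f) (hy : y ≤ 3 ^ m)
    (hz : y + z ≤ 3 ^ m + pairSlack e) : p * y + (p * z + q * y) ≤ 3 * (3 ^ m * 3 ^ a) := by
  have he := pairSlack_le_one e
  have hf := pairSlack_le_one f
  have hN := Nat.one_le_pow m 3 (by norm_num)
  have hA := Nat.one_le_pow a 3 (by norm_num)
  calc p * y + (p * z + q * y) = p * (y + z) + q * y := by ring
    _ ≤ p * (3 ^ m + 1) + q * 3 ^ m :=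
      add_le_add (Nat.mul_le_mul_left p (by omega)) (Nat.mul_le_mul_left q hy)
    _ = 3 ^ m * (p + q) + p := by ring
    _ ≤ 3 ^ m * (3 ^ a + 1) + 3 ^ a := add_le_add (Nat.mul_le_mul_left _ (by omega)) hp
    _ ≤ 3 * (3 ^ m * 3 ^ a) := by nlinarith

lemma tree_tree_le (hr : p + q + r ≤ 3 ^ a + tripleSlack f a) (hp : p ≤ 3 ^ a) (hy : y ≤ 3 ^ m)
    (hx : x ≤ 3 ^ m + tripleSlack e m) :
    (p + q + r) * x + 2 * (p * y) ≤ 9 * (3 ^ m * 3 ^ a) + 2 * pairSlack (e + f) := by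
  have hN := Nat.one_le_pow m 3 (by norm_num)
  have hA := Nat.one_le_pow a 3 (by norm_num)
  have hx' : x ≤ 2 * 3 ^ m + pairSlack e := by have := tripleSlack_le e m; omega
  have hr' : p + q + r ≤ 2 * 3 ^ a + pairSlack f := by have := tripleSlack_le f a; omega
  have hmul := Nat.mul_le_mul hr' hx'
  have hpy := Nat.mul_le_mul hp hy
  rw [pairSlack_add]
  have he := pairSlack_le_one e
  have hf := pairSlack_le_one f
  interval_cases pairSlack e <;> interval_cases pairSlack f <;> nlinarith

lemma tree_forest_le (hr : p + q + r ≤ 3 ^ a + tripleSlack f a) (hp : p ≤ 3 ^ a) (hy : 1 ≤ y)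
    (hx : x + 2 * y ≤ 3 * 3 ^ m + 2 * pairSlack e) :
    (p + q + r) * x + 2 * (p * y) ≤ 9 * (3 ^ m * 3 ^ a) + 2 * pairSlack (e + f) := by
  have hN := Nat.one_le_pow m 3 (by norm_num)
  have hA := Nat.one_le_pow a 3 (by norm_num)
  have hr' : p + q + r ≤ 2 * 3 ^ a + pairSlack f := by have := tripleSlack_le f a; omega
  have he := pairSlack_le_one e
  have hf := pairSlack_le_one f
  have hmul := le_of_add_mul_le (by omega : x ≤ 3 * 3 ^ m) hx hp (by omega : p ≤ p + q + r) hr'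
  rw [pairSlack_add, mul_left_comm 2]
  refine hmul.trans ?_
  interval_cases pairSlack e <;> interval_cases pairSlack f <;> nlinarith

/-- Trees with a free root satisfy the first alternative of the bound on `x`, forests with several
components the second. -/
lemma FreeRoots.bounds {n : ℕ} (h : FreeRoots n x y z) :
    (n = 0 ∧ x = 1 ∧ y = 1 ∧ z = 0) ∨
      ∃ a e, n = 3 * (a + 1) + e ∧ e < 3 ∧ y ≤ 3 ^ a ∧ y + z ≤ 3 ^ a + pairSlack e ∧
        (x ≤ 3 ^ a + tripleSlack e a ∨ x + 2 * y ≤ 3 * 3 ^ a + 2 * pairSlack e) := by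
  induction h with
  | nil => simp
  | @cons n p q r n' x y z h h' ih =>
    obtain ⟨a, f, rfl, hf, -, hp, hq, hr⟩ := h
    right
    rcases ih with ⟨rfl, rfl, rfl, rfl⟩ | ⟨m, e, rfl, he, hy, hz, hx⟩
    · exact ⟨a, f, by omega, hf, by simpa using hp, by simpa using hq, .inl (by simpa using hr)⟩
    have hpair := pair_product_le hp hq hy hz
    have hfst : (p + q + r) * x + 2 * (p * y) ≤ 9 * (3 ^ m * 3 ^ a) + 2 * pairSlack (e + f) :=
      hx.elim (tree_tree_le hr hp hy) (tree_forest_le hr hp h'.one_le)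
    have hpow : 3 ^ (m + a + 1) = 3 * (3 ^ m * 3 ^ a) := by ring
    have hpow' : 3 ^ (m + a + 2) = 9 * (3 ^ m * 3 ^ a) := by ring
    rcases Nat.lt_or_ge (e + f) 3 with hef | hef
    · exact ⟨m + a + 1, e + f, by omega, hef, by omega, by omega, .inr (by omega)⟩
    · have hzero : pairSlack (e + f) = 0 := if_neg (by omega)
      exact ⟨m + a + 2, e + f - 3, by omega, by omega, by omega, by omega, .inr (by omega)⟩

lemma FreeRoots.add_two_mul_add_le {n : ℕ} (h : FreeRoots n x y z) {s e : ℕ} (hn : n = 3 * s + e)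
    (he : e < 3) : x + 2 * y + z ≤ 3 ^ s + tripleSlack e s := by
  obtain ⟨m, e', hm, he', -, -, -, hsum⟩ := h.mul_heavy heavyRoots_two
  obtain ⟨rfl, rfl⟩ : m = s ∧ e' = e := by omega
  omega

lemma FreeRoots.two_mul_add_le {n : ℕ} (h : FreeRoots n x y z) {s e : ℕ} (hn : n = 3 * s + e)
    (he : e < 3) : y ≤ 3 ^ s ∧ 2 * y + z ≤ 3 ^ s + pairSlack e := by
  rcases h.bounds with ⟨rfl, -, rfl, rfl⟩ | ⟨a, e', hn', he', hy, hz, -⟩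
  · obtain ⟨rfl, rfl⟩ : s = 0 ∧ e = 0 := by omega
    simp [pairSlack]
  · obtain ⟨rfl, rfl⟩ : s = a + 1 ∧ e' = e := by omega
    have := pairSlack_le_one e'
    rw [pow_succ]
    have := Nat.one_le_pow a 3 (by norm_num)
    omega

lemma FreeRoots.root {n : ℕ} (h : FreeRoots n x y z) : LightRoots (n + 1) (y + z) x y := by
  have hn : n = 3 * (n / 3) + n % 3 := (Nat.div_add_mod n 3).symm
  have he : n % 3 < 3 := Nat.mod_lt _ (by norm_num)
  obtain ⟨hy, hz⟩ := h.two_mul_add_le hn he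
  have hsum := h.add_two_mul_add_le hn he
  exact ⟨by omega, n / 3, n % 3, by omega, he, h.one_le, hy, by omega, by omega⟩

end FreeBounds

section Products

variable {n x u v z n' x' u' v' z' : ℕ}

/-- The left-hand side is largest at `x = B - z` and `u = C - B`, and likewise for the primed
variables; then it equals `B * B' - κ * κ' + (κ - z) * (κ' - z')` with `κ = 2 * B - C` and
`κ' = 2 * B' - C'`. Since `1 ≤ z ≤ κ` and `1 ≤ z' ≤ κ'`, the worst case is `z = z' = 1`. -/
lemma light_product_le {B C B' C' : ℕ} (hz : 1 ≤ z) (hzx : z ≤ x) (hx : z + x ≤ B)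
    (hu : z + x + u ≤ C) (hBC : 2 * C ≤ 3 * B) (hz' : 1 ≤ z') (hzx' : z' ≤ x')
    (hx' : z' + x' ≤ B') (hu' : z' + x' + u' ≤ C') (hBC' : 2 * C' ≤ 3 * B') :
    x * x' + (u * z' + z * u') + 2 * B + 2 * B' ≤ B * B' + C + C' + 1 := by
  zify at *
  have hux := mul_nonneg (sub_nonneg.2 hu) (by linarith : (0 : ℤ) ≤ z')
  have hux' := mul_nonneg (sub_nonneg.2 hu') (by linarith : (0 : ℤ) ≤ z)
  have hxB := mul_nonneg (sub_nonneg.2 hx) (sub_nonneg.2 hzx')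
  have hxB' := mul_nonneg (sub_nonneg.2 hx') (by linarith : (0 : ℤ) ≤ B - 2 * z)
  have hzκ : (0 : ℤ) ≤ (z - 1) * ((2 * B' - C') - 1) := mul_nonneg (by linarith) (by linarith)
  have hzκ' : (0 : ℤ) ≤ ((2 * B - C) - z) * (z' - 1) := mul_nonneg (by linarith) (by linarith)
  linarith

lemma LightRoots.exists_bounds (h : LightRoots n x u z) :
    ∃ m e, n + 1 = 3 * m + e + 2 ∧ e < 3 ∧ 1 ≤ z ∧ z ≤ x ∧ x ≤ 3 ^ m ∧
      z + x ≤ 3 ^ m + pairSlack e ∧ z + x + u ≤ 3 ^ m + tripleSlack e m ∧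
      2 * (3 ^ m + tripleSlack e m) ≤ 3 * (3 ^ m + pairSlack e) := by
  obtain ⟨hzx, m, e, hn, he, hz, -, hx, hu⟩ := h
  have := pairSlack_le_one e
  refine ⟨m, e, hn, he, hz, hzx, by omega, hx, hu, ?_⟩
  have := two_mul_add_one_le_three_pow m
  interval_cases e <;> simp only [pairSlack, tripleSlack] at * <;> grind

lemma light_product_slack_le {m a e f S : ℕ} (he : e < 3) (hf : f < 3)
    (hm : 2 ≤ 3 ^ m + pairSlack e) (ha : 2 ≤ 3 ^ a + pairSlack f)
    (h : S + 2 * (3 ^ m + pairSlack e) + 2 * (3 ^ a + pairSlack f) ≤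
      (3 ^ m + pairSlack e) * (3 ^ a + pairSlack f) + (3 ^ m + tripleSlack e m) +
        (3 ^ a + tripleSlack f a) + 1) :
    (e + f < 3 → S ≤ 3 ^ m * 3 ^ a + tripleSlack (e + f) (m + a)) ∧
      (3 ≤ e + f → S ≤ 3 * (3 ^ m * 3 ^ a)) := by
  have := succ_le_three_pow m
  have := succ_le_three_pow a
  have : 1 ≤ 3 ^ m * 3 ^ a := Nat.mul_pos (by omega) (by omega)
  interval_cases e <;> interval_cases f <;>
    simp only [pairSlack, tripleSlack, reduceIte, Nat.reduceEqDiff, Nat.reduceAdd, add_mul, mul_add,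
      mul_one, one_mul, mul_zero, zero_mul] at * <;> omega

lemma LightRoots.mul_light (h : LightRoots n x u z) (h' : LightRoots n' x' u' z') :
    HeavyRoots (n + n') (x * x') 0 (u * z' + z * u') := by
  obtain ⟨m, e, hn, he, hz0, hzx, hxm, hx, hu, hB⟩ := h.exists_bounds
  obtain ⟨a, f, hn', hf, hz0', hzx', hxa, hx', hu', hB'⟩ := h'.exists_bounds
  have hpow : 3 ^ (m + a) = 3 ^ m * 3 ^ a := pow_add ..
  have hprod : x * x' ≤ 3 ^ m * 3 ^ a := Nat.mul_le_mul hxm hxa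
  obtain ⟨hlt, hge⟩ := light_product_slack_le he hf (by omega) (by omega)
    (light_product_le hz0 hzx hx hu hB hz0' hzx' hx' hu' hB')
  refine .of_cases (m := m + a) (e := e + f) (by omega) (Nat.mul_pos (by omega) (by omega))
    (fun hef ↦ ?_) (fun hef ↦ ?_)
  · have := hlt hef
    omega
  · have := hge hef
    omega

lemma light_heavy_product_le {N A δ δ' : ℕ} (hz : 1 ≤ z) (hzx : z ≤ x) (hx : z + x ≤ N + δ)
    (hδ : δ ≤ 1) (hA : 1 ≤ A) (hx' : x' ≤ A) (hu' : x' + u' ≤ A + δ') (hδ' : δ' ≤ 1) :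
    x * x' + z * u' ≤ N * A + δ * δ' := by
  obtain ⟨w, rfl⟩ := Nat.exists_eq_add_of_le hzx
  have hsum : (z + w) * x' + z * u' ≤ w * A + z * (A + δ') := by
    calc (z + w) * x' + z * u' = w * x' + z * (x' + u') := by ring
      _ ≤ w * A + z * (A + δ') := by gcongr
  have hxA : (z + (z + w)) * A ≤ (N + δ) * A := Nat.mul_le_mul_right A hx
  have hzA : z + A ≤ z * A + 1 := by nlinarith
  interval_cases δ <;> interval_cases δ' <;> nlinarith

lemma LightRoots.mul_heavy (h : LightRoots n x u z) (h' : HeavyRoots n' x' u' v') :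
    HeavyRoots (n + n') (x * x') 0 (z * u') := by
  obtain ⟨m, e, hn, -, hz0, hzx, hxm, hx, -⟩ := h.exists_bounds
  obtain ⟨a, f, hn', -, hx0', hxa, hu', -⟩ := h'
  have hpow : 3 ^ (m + a) = 3 ^ m * 3 ^ a := pow_add ..
  have hprod : x * x' ≤ 3 ^ m * 3 ^ a := Nat.mul_le_mul hxm hxa
  have hkey := light_heavy_product_le hz0 hzx hx (pairSlack_le_one e)
    (Nat.one_le_pow a 3 (by norm_num)) hxa hu' (pairSlack_le_one f)
  rw [← pairSlack_add] at hkey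
  have hpos : 1 ≤ x * x' := Nat.mul_pos (by omega) hx0'
  refine .of_cases (m := m + a) (e := e + f + 1) (by omega) hpos (fun _ ↦ ?_) (fun _ ↦ ?_)
  · have hslack : pairSlack (e + f) ≤ tripleSlack (e + f + 1) (m + a) := by
      unfold pairSlack tripleSlack; grind
    omega
  · have := pairSlack_le_one (e + f)
    omega

lemma HeavyRoots.mul_heavy (h : HeavyRoots n x u v) (h' : HeavyRoots n' x' u' v') :
    HeavyRoots (n + n') (x * x') 0 0 := by
  obtain ⟨m, e, rfl, -, hx0, hx, -⟩ := h
  obtain ⟨a, f, rfl, -, hx0', hx', -⟩ := h'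
  have hpow : 3 ^ (m + a) = 3 ^ m * 3 ^ a := pow_add ..
  have hprod : x * x' ≤ 3 ^ m * 3 ^ a := Nat.mul_le_mul hx hx'
  exact .of_cases (m := m + a) (e := e + f + 2) (by omega) (Nat.mul_pos hx0 hx0')
    (fun _ ↦ by omega) (fun _ ↦ by omega)

end Products

/-! ## Generating polynomials of rooted forests -/

section Polynomials

open Polynomial

/-- `c` is the coefficient of `p` in degree `d`, an upper bound for the degree of `p`. If `p` counts
dissociation sets by size and `c ≠ 0`, then `c` counts those of maximum size. -/
def IsTopCoeff (p : ℕ[X]) (d c : ℕ) : Prop :=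
  p.natDegree ≤ d ∧ p.coeff d = c

namespace IsTopCoeff

variable {p q : ℕ[X]} {d e a b : ℕ}

lemma add (h : IsTopCoeff p d a) (h' : IsTopCoeff q d b) : IsTopCoeff (p + q) d (a + b) :=
  ⟨natDegree_add_le_of_degree_le h.1 h'.1, by rw [coeff_add, h.2, h'.2]⟩

lemma mul (h : IsTopCoeff p d a) (h' : IsTopCoeff q e b) :
    IsTopCoeff (p * q) (d + e) (a * b) :=
  ⟨natDegree_mul_le_of_le h.1 h'.1, by rw [coeff_mul_add_eq_of_natDegree_le h.1 h'.1, h.2, h'.2]⟩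

lemma X_mul (h : IsTopCoeff p d a) : IsTopCoeff (X * p) (d + 1) a :=
  ⟨by simpa [add_comm] using natDegree_mul_le_of_le natDegree_X_le h.1, by rw [coeff_X_mul, h.2]⟩

lemma zero_of_lt (h : IsTopCoeff p d a) (hde : d < e) : IsTopCoeff p e 0 :=
  ⟨h.1.trans hde.le, coeff_eq_zero_of_natDegree_lt (h.1.trans_lt hde)⟩

lemma congr {d' a' : ℕ} (h : IsTopCoeff p d a) (hd : d = d' := by omega)
    (ha : a = a' := by omega) : IsTopCoeff p d' a' :=
  hd ▸ ha ▸ h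

lemma leadingCoeff_eq (h : IsTopCoeff p d a) (ha : a ≠ 0) : p.leadingCoeff = a := by
  have hd : p.natDegree = d := le_antisymm h.1 (le_natDegree_of_ne_zero (h.2 ▸ ha))
  rw [leadingCoeff, hd, h.2]

lemma natCast (c : ℕ) : IsTopCoeff (c : ℕ[X]) 0 c :=
  ⟨(natDegree_natCast c).le, by simp⟩

end IsTopCoeff

/-- The orders and generating polynomials of forests with a set `R` of roots, one in each component:
the first polynomial counts all dissociation sets by size, the second those avoiding `R`, the third
those containing exactly one root, which is isolated in them. The constructors correspond to the
empty forest, to joining all roots to a new vertex which becomes the only root, and to disjoint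
unions. -/
inductive IsForestTriple : ℕ → ℕ[X] → ℕ[X] → ℕ[X] → Prop
  | empty : IsForestTriple 0 1 1 0
  | root {n : ℕ} {P Y Z : ℕ[X]} : IsForestTriple n P Y Z →
      IsForestTriple (n + 1) (P + X * Y + X * Z) P (X * Y)
  | union {n n' : ℕ} {P Y Z P' Y' Z' : ℕ[X]} : IsForestTriple n P Y Z →
      IsForestTriple n' P' Y' Z' →
      IsForestTriple (n + n') (P * P') (Y * Y') (Y * Z' + Z * Y')

/-- The trichotomy for the polynomials of a rooted forest: how far the degrees of the last two stay
behind that of the first determines which bounds the top coefficients satisfy. -/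
inductive HasForestProfile (n : ℕ) (P Y Z : ℕ[X]) : Prop
  | free {D x y z : ℕ} (h : FreeRoots n x y z) (hP : IsTopCoeff P D x) (hY : IsTopCoeff Y D y)
      (hZ : IsTopCoeff Z D z)
  | light {D x u z : ℕ} (h : LightRoots n x u z) (hP : IsTopCoeff P (D + 1) x)
      (hY : IsTopCoeff Y D u) (hZ : IsTopCoeff Z (D + 1) z)
  | heavy {D x u v : ℕ} (h : HeavyRoots n x u v) (hP : IsTopCoeff P (D + 1) x)
      (hY : IsTopCoeff Y D u) (hZ : IsTopCoeff Z D v)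

namespace HasForestProfile

variable {n n' : ℕ} {P Y Z P' Y' Z' : ℕ[X]}

lemma root (h : HasForestProfile n P Y Z) :
    HasForestProfile (n + 1) (P + X * Y + X * Z) P (X * Y) := by
  rcases h with ⟨h, hP, hY, hZ⟩ | ⟨h, hP, hY, hZ⟩ | ⟨h, hP, hY, hZ⟩
  · exact .light h.root
      (((hP.zero_of_lt (Nat.lt_succ_self _)).add hY.X_mul |>.add hZ.X_mul).congr) hP hY.X_mul
  · exact .heavy h.root
      (((hP.zero_of_lt (by omega)).add (hY.X_mul.zero_of_lt (by omega)) |>.add hZ.X_mul).congr) hP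
      hY.X_mul
  · exact .free h.root (hP.add hY.X_mul |>.add hZ.X_mul) hP hY.X_mul

lemma swap (h : HasForestProfile (n + n') (P * P') (Y * Y') (Y * Z' + Z * Y')) :
    HasForestProfile (n' + n) (P' * P) (Y' * Y) (Y' * Z + Z' * Y) := by
  convert h using 1 <;> ring

lemma union_free {D x y z : ℕ} (h : FreeRoots n x y z) (hP : IsTopCoeff P D x)
    (hY : IsTopCoeff Y D y) (hZ : IsTopCoeff Z D z) (h' : HasForestProfile n' P' Y' Z') :
    HasForestProfile (n + n') (P * P') (Y * Y') (Y * Z' + Z * Y') := by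
  rcases h' with ⟨h', hP', hY', hZ'⟩ | @⟨D', _, _, _, h', hP', hY', hZ'⟩ |
    @⟨D', _, _, _, h', hP', hY', hZ'⟩
  · exact .free (h.mul_free h') (hP.mul hP') (hY.mul hY') ((hY.mul hZ').add (hZ.mul hY'))
  · exact .light (D := D + D') (h.mul_light h') (hP.mul hP') (hY.mul hY')
      (((hY.mul hZ').add ((hZ.mul hY').zero_of_lt (by omega))).congr)
  · exact .heavy (D := D + D') (h.mul_heavy h') (hP.mul hP') (hY.mul hY')
      ((hY.mul hZ').add (hZ.mul hY'))

lemma union_light {D x u z : ℕ} (h : LightRoots n x u z) (hP : IsTopCoeff P (D + 1) x)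
    (hY : IsTopCoeff Y D u) (hZ : IsTopCoeff Z (D + 1) z) (h' : HasForestProfile n' P' Y' Z') :
    HasForestProfile (n + n') (P * P') (Y * Y') (Y * Z' + Z * Y') := by
  rcases h' with ⟨h', hP', hY', hZ'⟩ | @⟨D', _, _, _, h', hP', hY', hZ'⟩ |
    @⟨D', _, _, _, h', hP', hY', hZ'⟩
  · exact (union_free h' hP' hY' hZ' (.light h hP hY hZ)).swap
  · exact .heavy (D := D + D' + 1) (h.mul_light h') ((hP.mul hP').congr)
      ((hY.mul hY').zero_of_lt (by omega)) (((hY.mul hZ').congr).add ((hZ.mul hY').congr))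
  · exact .heavy (D := D + D' + 1) (h.mul_heavy h') ((hP.mul hP').congr)
      ((hY.mul hY').zero_of_lt (by omega))
      (((hY.mul hZ').zero_of_lt (e := D + 1 + D') (by omega)).add (hZ.mul hY') |>.congr)

lemma union_heavy {D x u v : ℕ} (h : HeavyRoots n x u v) (hP : IsTopCoeff P (D + 1) x)
    (hY : IsTopCoeff Y D u) (hZ : IsTopCoeff Z D v) (h' : HasForestProfile n' P' Y' Z') :
    HasForestProfile (n + n') (P * P') (Y * Y') (Y * Z' + Z * Y') := by
  rcases h' with ⟨h', hP', hY', hZ'⟩ | ⟨h', hP', hY', hZ'⟩ | @⟨D', _, _, _, h', hP', hY', hZ'⟩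
  · exact (union_free h' hP' hY' hZ' (.heavy h hP hY hZ)).swap
  · exact (union_light h' hP' hY' hZ' (.heavy h hP hY hZ)).swap
  · exact .heavy (D := D + D' + 1) (h.mul_heavy h') ((hP.mul hP').congr)
      ((hY.mul hY').zero_of_lt (by omega))
      (((hY.mul hZ').zero_of_lt (by omega)).add ((hZ.mul hY').zero_of_lt (by omega)))

lemma union (h : HasForestProfile n P Y Z) (h' : HasForestProfile n' P' Y' Z') :
    HasForestProfile (n + n') (P * P') (Y * Y') (Y * Z' + Z * Y') := by
  rcases h with ⟨h, hP, hY, hZ⟩ | ⟨h, hP, hY, hZ⟩ | ⟨h, hP, hY, hZ⟩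
  · exact union_free h hP hY hZ h'
  · exact union_light h hP hY hZ h'
  · exact union_heavy h hP hY hZ h'

end HasForestProfile

lemma IsForestTriple.hasForestProfile {n : ℕ} {P Y Z : ℕ[X]} (h : IsForestTriple n P Y Z) :
    HasForestProfile n P Y Z := by
  induction h with
  | empty =>
    have hone : IsTopCoeff 1 0 1 := ⟨natDegree_one.le, coeff_one_zero⟩
    exact .free .nil hone hone ⟨natDegree_zero.le, coeff_zero 0⟩
  | root _ ih => exact ih.root
  | union _ _ ih ih' => exact ih.union ih'

/-- The dissociation polynomial of the path on `n` vertices. The recursion distinguishes whether a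
dissociation set contains neither, the first only, or both of the first two vertices of the path. -/
noncomputable def pathPoly : ℕ → ℕ[X]
  | 0 => 1
  | 1 => 1 + X
  | 2 => 1 + X + X * (1 + X)
  | n + 3 => pathPoly (n + 2) + X * pathPoly (n + 1) + X * (X * pathPoly n)

lemma isTopCoeff_pathPoly (t : ℕ) :
    IsTopCoeff (pathPoly (3 * t)) (2 * t) ((t + 2).choose 2) ∧
      IsTopCoeff (pathPoly (3 * t + 1)) (2 * t + 1) (t + 1) ∧
      IsTopCoeff (pathPoly (3 * t + 2)) (2 * t + 2) 1 := by
  have hone : IsTopCoeff 1 0 1 := ⟨natDegree_one.le, coeff_one_zero⟩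
  induction t with
  | zero =>
    have hX : IsTopCoeff (1 + X) 1 1 := by
      simpa using (hone.zero_of_lt one_pos).add hone.X_mul
    exact ⟨hone, hX, (hX.zero_of_lt one_lt_two).add hX.X_mul |>.congr⟩
  | succ t ih =>
    obtain ⟨h₀, h₁, h₂⟩ := ih
    have hchoose : (t + 1 + 2).choose 2 = t + 2 + (t + 2).choose 2 := by
      rw [Nat.choose_succ_succ' (t + 2) 1, Nat.choose_one_right]
    have h₃ : IsTopCoeff (pathPoly (3 * t + 3)) (2 * t + 2) ((t + 1 + 2).choose 2) :=
      h₂.add h₁.X_mul |>.add h₀.X_mul.X_mul |>.congr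
    have h₄ : IsTopCoeff (pathPoly (3 * t + 4)) (2 * t + 3) (t + 2) :=
      (h₃.zero_of_lt (by omega)).add h₂.X_mul |>.add h₁.X_mul.X_mul |>.congr
    have h₅ : IsTopCoeff (pathPoly (3 * t + 5)) (2 * t + 4) 1 :=
      (h₄.zero_of_lt (by omega)).add (h₃.X_mul.zero_of_lt (by omega)) |>.add h₂.X_mul.X_mul |>.congr
    exact ⟨h₃, h₄, h₅⟩

/-- The dissociation polynomial of a cycle on `l + 4` vertices one of which is joined to all roots
of a forest with the polynomials `P`, `Y`, `Z` of `IsForestTriple`. The three summands count the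
sets avoiding that vertex, containing it as an isolated vertex, and containing it together with a
neighbour. -/
noncomputable def pottedPoly (l : ℕ) (P Y Z : ℕ[X]) : ℕ[X] :=
  P * pathPoly (l + 3) + X * (Y * pathPoly (l + 1)) +
    X * (Y * (2 * X * pathPoly l) + Z * pathPoly (l + 1))

section PottedPoly

variable {P Y Z : ℕ[X]} {D x y z u v : ℕ}

lemma isTopCoeff_two_mul_X_mul_pathPoly (r : ℕ) :
    IsTopCoeff (2 * X * pathPoly (3 * r)) (2 * r + 1) (2 * (r + 2).choose 2) := by
  rw [mul_assoc]
  exact ((IsTopCoeff.natCast 2).mul (isTopCoeff_pathPoly r).1.X_mul).congr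

lemma isTopCoeff_pottedPoly_of_free (r : ℕ) (hP : IsTopCoeff P D x)
    (hY : IsTopCoeff Y D y) (hZ : IsTopCoeff Z D z) :
    IsTopCoeff (pottedPoly (3 * r) P Y Z) (D + (2 * r + 2)) (x * (r + 3).choose 2 + y * (r + 1) +
      (y * (2 * (r + 2).choose 2) + z * (r + 1))) := by
  have h₁ := (isTopCoeff_pathPoly r).2.1
  exact ((hP.mul (isTopCoeff_pathPoly (r + 1)).1).add (hY.mul h₁).X_mul).add
    ((hY.mul (isTopCoeff_two_mul_X_mul_pathPoly r)).add (hZ.mul h₁)).X_mul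

lemma isTopCoeff_pottedPoly_of_light (r : ℕ) (hP : IsTopCoeff P (D + 1) x)
    (hY : IsTopCoeff Y D u) (hZ : IsTopCoeff Z (D + 1) z) :
    IsTopCoeff (pottedPoly (3 * r) P Y Z) (D + 1 + (2 * r + 2))
      (x * (r + 3).choose 2 + z * (r + 1)) := by
  have h := isTopCoeff_pottedPoly_of_free r hP (hY.zero_of_lt D.lt_succ_self) hZ
  simpa only [zero_mul, add_zero, zero_add] using h

lemma isTopCoeff_pottedPoly_of_heavy (r : ℕ) (hP : IsTopCoeff P (D + 1) x)
    (hY : IsTopCoeff Y D u) (hZ : IsTopCoeff Z D v) :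
    IsTopCoeff (pottedPoly (3 * r) P Y Z) (D + 1 + (2 * r + 2)) (x * (r + 3).choose 2) := by
  have h := isTopCoeff_pottedPoly_of_light r hP hY (hZ.zero_of_lt D.lt_succ_self)
  simpa only [zero_mul, add_zero] using h

end PottedPoly

end Polynomials

/-! ## Dissociation polynomials -/

section DissocPoly

open Polynomial

variable {G : SimpleGraph V} {A B R R' S T : Finset V} {v : V}

lemma isDissoc_iff : IsDissoc G S ↔ ∀ v ∈ S, ∀ a ∈ S, ∀ b ∈ S, G.Adj v a → G.Adj v b → a = b := by
  unfold IsDissoc nbrCount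
  refine forall₂_congr fun v _ ↦ ?_
  rw [Set.ncard_le_one (S.finite_toSet.subset (Set.sep_subset _ _))]
  exact ⟨fun h a ha b hb hva hvb ↦ h a ⟨ha, hva⟩ b ⟨hb, hvb⟩,
    fun h a ha b hb ↦ h a ha.1 b hb.1 ha.2 hb.2⟩

lemma IsDissoc.mono (h : IsDissoc G T) (hST : S ⊆ T) : IsDissoc G S := by
  rw [isDissoc_iff] at *
  grind

lemma isDissoc_union (h : ∀ s ∈ S, ∀ t ∈ T, ¬G.Adj s t) :
    IsDissoc G (S ∪ T) ↔ IsDissoc G S ∧ IsDissoc G T := by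
  refine ⟨fun hd ↦ ⟨hd.mono Finset.subset_union_left, hd.mono Finset.subset_union_right⟩, ?_⟩
  have hsymm : ∀ t ∈ T, ∀ s ∈ S, ¬G.Adj t s := fun t ht s hs hadj ↦ h s hs t ht hadj.symm
  simp only [isDissoc_iff, Finset.mem_union]
  grind

lemma isDissoc_pair (a b : V) : IsDissoc G {a, b} := by
  have hne : ∀ c, ¬G.Adj c c := fun c ↦ G.loopless.irrefl c
  rw [isDissoc_iff]
  grind

lemma isDissoc_singleton (a : V) : IsDissoc G {a} :=
  (isDissoc_pair a a).mono (by simp)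

/-- The dissociation sets of the subgraph of `G` induced by `A`. -/
noncomputable def dissocSets (G : SimpleGraph V) (A : Finset V) : Finset (Finset V) :=
  A.powerset.filter (IsDissoc G)

lemma mem_dissocSets : S ∈ dissocSets G A ↔ S ⊆ A ∧ IsDissoc G S := by
  rw [dissocSets, Finset.mem_filter, Finset.mem_powerset]

/-- The dissociation polynomial of the subgraph of `G` induced by `A`: the coefficient of `X ^ d`
is the number of its dissociation sets of size `d`. -/
noncomputable def dissocPoly (G : SimpleGraph V) (A : Finset V) : ℕ[X] :=
  ∑ S ∈ dissocSets G A, X ^ S.card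

/-- The polynomial counting by size those dissociation sets of the subgraph of `G` induced by `A`
which contain exactly one vertex of `R` and none of its neighbours in `A \ R`. -/
noncomputable def isolatedRootPoly (G : SimpleGraph V) (A R : Finset V) : ℕ[X] :=
  ∑ r ∈ R, X * dissocPoly G ((A \ R).filter (¬G.Adj r ·))

lemma coeff_dissocPoly (d : ℕ) :
    (dissocPoly G A).coeff d = ((dissocSets G A).filter (·.card = d)).card := by
  simp only [dissocPoly, finsetSum_coeff, coeff_X_pow, Finset.card_filter, eq_comm]

lemma empty_mem_dissocSets : ∅ ∈ dissocSets G A := by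
  simp [mem_dissocSets, isDissoc_iff]

lemma dissNumOn_eq_natDegree : dissNumOn G A = (dissocPoly G A).natDegree := by
  have hcoeff {S : Finset V} (hS : S ∈ dissocSets G A) : (dissocPoly G A).coeff S.card ≠ 0 := by
    rw [coeff_dissocPoly, Finset.card_ne_zero]
    exact ⟨S, Finset.mem_filter.2 ⟨hS, rfl⟩⟩
  have hne : dissocPoly G A ≠ 0 := fun h ↦ hcoeff empty_mem_dissocSets (by rw [h, coeff_zero])
  refine IsGreatest.csSup_eq ⟨?_, ?_⟩
  · have htop := leadingCoeff_ne_zero.2 hne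
    rw [leadingCoeff, coeff_dissocPoly, Finset.card_ne_zero] at htop
    obtain ⟨S, hS⟩ := htop
    rw [Finset.mem_filter, mem_dissocSets] at hS
    exact ⟨S, Finset.coe_subset.2 hS.1.1, hS.1.2, hS.2⟩
  · rintro _ ⟨S, hSA, hS, rfl⟩
    exact le_natDegree_of_ne_zero (hcoeff (mem_dissocSets.2 ⟨Finset.coe_subset.1 hSA, hS⟩))

lemma numMaxDissocOn_eq_leadingCoeff : numMaxDissocOn G A = (dissocPoly G A).leadingCoeff := by
  rw [leadingCoeff, coeff_dissocPoly, ← dissNumOn_eq_natDegree, numMaxDissocOn]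
  refine Nat.subtype_card _ fun S ↦ ?_
  rw [Finset.mem_filter, mem_dissocSets, IsMaxDissocOn, Finset.coe_subset, and_assoc]

lemma dissocPoly_empty : dissocPoly G ∅ = 1 := by
  have : dissocSets G ∅ = {∅} := by
    ext S
    simp only [mem_dissocSets, Finset.subset_empty, Finset.mem_singleton]
    exact ⟨And.left, fun h ↦ ⟨h, h ▸ (mem_dissocSets.1 (empty_mem_dissocSets (A := ∅))).2⟩⟩
  rw [dissocPoly, this, Finset.sum_singleton, Finset.card_empty, pow_zero]

/-- If the dissociation sets of `A` that meet `M` in `T` arise from those of `B` by adding `T`, then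
they are counted by the dissociation polynomial of `B`. -/
lemma sum_dissocSets_inter_eq {M : Finset V} (hTM : T ⊆ M) (hMA : M ⊆ A) (hB : B ⊆ A \ M)
    (h : ∀ S ⊆ A \ M, IsDissoc G (T ∪ S) ↔ S ⊆ B ∧ IsDissoc G S) :
    ∑ S ∈ (dissocSets G A).filter (· ∩ M = T), (X ^ S.card : ℕ[X]) =
      X ^ T.card * dissocPoly G B := by
  have hsplit {S : Finset V} (hS : S ∩ M = T) : T ∪ S \ M = S := by grind
  rw [dissocPoly, Finset.mul_sum]
  refine Finset.sum_bij' (fun S _ ↦ S \ M) (fun U _ ↦ T ∪ U) ?_ ?_ ?_ ?_ ?_ <;>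
    simp only [Finset.mem_filter, mem_dissocSets]
  · rintro S ⟨⟨hSA, hS⟩, hST⟩
    exact (h _ (Finset.sdiff_subset_sdiff hSA le_rfl)).1 ((hsplit hST).symm ▸ hS)
  · rintro U ⟨hUB, hU⟩
    exact ⟨⟨by grind, (h U (hUB.trans hB)).2 ⟨hUB, hU⟩⟩, by grind⟩
  · exact fun S hS ↦ hsplit hS.2
  · grind
  · rintro S ⟨-, hST⟩
    rw [← pow_add, ← hST, Finset.card_inter_add_card_sdiff]

lemma dissocPoly_union (hdisj : Disjoint A B) (h : ∀ a ∈ A, ∀ b ∈ B, ¬G.Adj a b) :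
    dissocPoly G (A ∪ B) = dissocPoly G A * dissocPoly G B := by
  have hBsub : B ⊆ (A ∪ B) \ A := by
    have := Finset.disjoint_left.1 hdisj
    grind
  have hmaps : ∀ S ∈ dissocSets G (A ∪ B), S ∩ A ∈ dissocSets G A := by
    intro S hS
    rw [mem_dissocSets] at *
    exact ⟨Finset.inter_subset_right, hS.2.mono Finset.inter_subset_left⟩
  rw [dissocPoly, ← Finset.sum_fiberwise_of_maps_to hmaps, dissocPoly, Finset.sum_mul]
  refine Finset.sum_congr rfl fun T hT ↦ ?_
  rw [mem_dissocSets] at hT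
  refine sum_dissocSets_inter_eq hT.1 Finset.subset_union_left hBsub fun S hS ↦ ?_
  have hSB : S ⊆ B := by grind
  rw [isDissoc_union fun t ht s hs ↦ h t (hT.1 ht) s (hSB hs)]
  exact ⟨fun hd ↦ ⟨hSB, hd.2⟩, fun hd ↦ ⟨hT.2, hd.2⟩⟩

lemma isDissoc_pair_union {r : V} (hvr : G.Adj v r) (hv : v ∉ S) (hvS : ∀ s ∈ S, ¬G.Adj v s) :
    IsDissoc G ({v, r} ∪ S) ↔ (∀ s ∈ S, ¬G.Adj r s) ∧ IsDissoc G S := by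
  have hpair : (∀ a ∈ ({v, r} : Finset V), ∀ s ∈ S, ¬G.Adj a s) ↔ ∀ s ∈ S, ¬G.Adj r s := by
    simpa using fun _ ↦ hvS
  refine ⟨fun h ↦ ⟨fun s hs hrs ↦ hv ?_, h.mono Finset.subset_union_right⟩,
    fun h ↦ (isDissoc_union (hpair.2 h.1)).2 ⟨isDissoc_pair v r, h.2⟩⟩
  rwa [isDissoc_iff.1 h r (by simp) v (by simp) s (by simp [hs]) hvr.symm hrs]

lemma sum_dissocSets_inter_eq_singleton (hv : v ∉ A) (hR : R = A.filter (G.Adj v)) :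
    ∑ S ∈ (dissocSets G (insert v A)).filter (· ∩ insert v R = {v}), (X ^ S.card : ℕ[X]) =
      X * dissocPoly G (A \ R) := by
  have hsdiff : insert v A \ insert v R = A \ R := by grind
  rw [sum_dissocSets_inter_eq (B := A \ R) (by simp) (by grind) hsdiff.ge, Finset.card_singleton,
    pow_one]
  intro S hS
  rw [hsdiff] at hS
  rw [isDissoc_union (by grind)]
  exact ⟨fun h ↦ ⟨hS, h.2⟩, fun h ↦ ⟨isDissoc_singleton v, h.2⟩⟩

lemma sum_dissocSets_inter_eq_pair {r : V} (hv : v ∉ A) (hR : R = A.filter (G.Adj v))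
    (hr : r ∈ R) :
    ∑ S ∈ (dissocSets G (insert v A)).filter (· ∩ insert v R = {v, r}), (X ^ S.card : ℕ[X]) =
      X * (X * dissocPoly G ((A \ R).filter (¬G.Adj r ·))) := by
  have hsdiff : insert v A \ insert v R = A \ R := by grind
  rw [sum_dissocSets_inter_eq (B := (A \ R).filter (¬G.Adj r ·)) (by grind) (by grind) (by grind),
    Finset.card_pair (by grind), pow_two, mul_assoc]
  intro S hS
  rw [hsdiff] at hS
  rw [isDissoc_pair_union (by grind) (by grind) (by grind), Finset.subset_iff]
  grind

lemma sum_dissocSets_mem (hv : v ∉ A) (hR : R = A.filter (G.Adj v)) :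
    ∑ S ∈ (dissocSets G (insert v A)).filter (v ∈ ·), (X ^ S.card : ℕ[X]) =
      X * dissocPoly G (A \ R) + X * isolatedRootPoly G A R := by
  have hne {r : V} (hr : r ∈ R) : r ≠ v := by grind
  have hmaps : ∀ S ∈ (dissocSets G (insert v A)).filter (v ∈ ·),
      S ∩ insert v R ∈ insert {v} (R.image fun r ↦ {v, r}) := by
    intro S hS
    rw [Finset.mem_filter, mem_dissocSets, isDissoc_iff] at hS
    by_cases hSR : ∃ r ∈ R, r ∈ S
    · obtain ⟨r, hr, hrS⟩ := hSR
      exact Finset.mem_insert_of_mem (Finset.mem_image.2 ⟨r, hr, by ext; grind⟩)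
    · exact Finset.mem_insert.2 (.inl (by ext; grind))
  have hfiber {T : Finset V} (hT : v ∈ T) :
      ((dissocSets G (insert v A)).filter (v ∈ ·)).filter (· ∩ insert v R = T) =
        (dissocSets G (insert v A)).filter (· ∩ insert v R = T) := by
    grind
  have hmem {r r' : V} (h : ({v, r} : Finset V) ⊆ {v, r'}) : r = v ∨ r = r' := by
    simpa using h (Finset.mem_insert_of_mem (Finset.mem_singleton_self r))
  rw [← Finset.sum_fiberwise_of_maps_to hmaps, Finset.sum_insert, Finset.sum_image,
    hfiber (Finset.mem_singleton_self v), sum_dissocSets_inter_eq_singleton hv hR, isolatedRootPoly,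
    Finset.mul_sum]
  · congr 1
    refine Finset.sum_congr rfl fun r hr ↦ ?_
    rw [hfiber (Finset.mem_insert_self v _), sum_dissocSets_inter_eq_pair hv hR hr]
  · exact fun r hr r' _ h ↦ (hmem h.le).resolve_left (hne hr)
  · rintro h
    obtain ⟨r, hr, hvr⟩ := Finset.mem_image.1 h
    exact hne hr (or_self_iff.1 (hmem (r' := v) (by simp [hvr])))

lemma dissocPoly_insert (hv : v ∉ A) (hR : R = A.filter (G.Adj v)) :
    dissocPoly G (insert v A) =
      dissocPoly G A + X * dissocPoly G (A \ R) + X * isolatedRootPoly G A R := by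
  have havoid : ∑ S ∈ (dissocSets G (insert v A)).filter (v ∉ ·), (X ^ S.card : ℕ[X]) =
      dissocPoly G A := by
    rw [dissocPoly]
    congr 1
    ext S
    rw [Finset.mem_filter, mem_dissocSets, mem_dissocSets]
    grind
  rw [add_assoc, ← havoid, ← sum_dissocSets_mem hv hR, add_comm,
    Finset.sum_filter_add_sum_filter_not, dissocPoly]

lemma union_sdiff_union (hdisj : Disjoint A B) (hR : R ⊆ A) (hR' : R' ⊆ B) :
    (A ∪ B) \ (R ∪ R') = A \ R ∪ B \ R' := by
  have := Finset.disjoint_left.1 hdisj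
  grind

lemma dissocPoly_union_sdiff (hdisj : Disjoint A B) (h : ∀ a ∈ A, ∀ b ∈ B, ¬G.Adj a b)
    (hR : R ⊆ A) (hR' : R' ⊆ B) :
    dissocPoly G ((A ∪ B) \ (R ∪ R')) = dissocPoly G (A \ R) * dissocPoly G (B \ R') := by
  rw [union_sdiff_union hdisj hR hR']
  exact dissocPoly_union (hdisj.mono Finset.sdiff_subset Finset.sdiff_subset) fun a ha b hb ↦
    h a (Finset.sdiff_subset ha) b (Finset.sdiff_subset hb)

lemma isolatedRootPoly_union (hdisj : Disjoint A B) (h : ∀ a ∈ A, ∀ b ∈ B, ¬G.Adj a b)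
    (hR : R ⊆ A) (hR' : R' ⊆ B) :
    isolatedRootPoly G (A ∪ B) (R ∪ R') = dissocPoly G (A \ R) * isolatedRootPoly G B R' +
      isolatedRootPoly G A R * dissocPoly G (B \ R') := by
  have hdisj' := hdisj.mono (Finset.sdiff_subset (t := R)) (Finset.sdiff_subset (t := R'))
  have hA : ∀ r ∈ R', dissocPoly G ((A \ R ∪ B \ R').filter (¬G.Adj r ·)) =
      dissocPoly G (A \ R) * dissocPoly G ((B \ R').filter (¬G.Adj r ·)) := by
    intro r hr
    have hfilter : (A \ R).filter (¬G.Adj r ·) = A \ R := Finset.filter_true_of_mem fun a ha hadj ↦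
      h a (Finset.sdiff_subset ha) r (hR' hr) hadj.symm
    rw [Finset.filter_union, hfilter, dissocPoly_union]
    · exact hdisj'.mono_right (Finset.filter_subset _ _)
    · exact fun a ha b hb ↦
        h a (Finset.sdiff_subset ha) b (Finset.sdiff_subset (Finset.filter_subset _ _ hb))
  have hB : ∀ r ∈ R, dissocPoly G ((A \ R ∪ B \ R').filter (¬G.Adj r ·)) =
      dissocPoly G ((A \ R).filter (¬G.Adj r ·)) * dissocPoly G (B \ R') := by
    intro r hr
    have hfilter : (B \ R').filter (¬G.Adj r ·) = B \ R' := Finset.filter_true_of_mem fun b hb ↦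
      h r (hR hr) b (Finset.sdiff_subset hb)
    rw [Finset.filter_union, hfilter, dissocPoly_union]
    · exact hdisj'.mono_left (Finset.filter_subset _ _)
    · exact fun a ha b hb ↦
        h a (Finset.sdiff_subset (Finset.filter_subset _ _ ha)) b (Finset.sdiff_subset hb)
  calc
    _ = ∑ r ∈ R, X * (dissocPoly G ((A \ R).filter (¬G.Adj r ·)) * dissocPoly G (B \ R')) +
          ∑ r ∈ R', X * (dissocPoly G (A \ R) * dissocPoly G ((B \ R').filter (¬G.Adj r ·))) := by
      rw [isolatedRootPoly, union_sdiff_union hdisj hR hR', Finset.sum_union (hdisj.mono hR hR')]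
      exact congrArg₂ (· + ·) (Finset.sum_congr rfl fun r hr ↦ by rw [hB r hr])
        (Finset.sum_congr rfl fun r hr ↦ by rw [hA r hr])
    _ = _ := by
      simp only [isolatedRootPoly, Finset.mul_sum, Finset.sum_mul, ← mul_assoc,
        mul_comm X (dissocPoly G (A \ R))]
      rw [add_comm]

lemma isolatedRootPoly_insert (hv : v ∉ A) (hR : R = A.filter (G.Adj v)) :
    isolatedRootPoly G (insert v A) {v} = X * dissocPoly G (A \ R) := by
  rw [isolatedRootPoly, Finset.sum_singleton, Finset.sdiff_singleton_eq_erase,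
    Finset.erase_insert hv, Finset.filter_not, hR]

end DissocPoly

/-! ## Induced paths -/

/-- The vertices `p i` with `a ≤ i < b` are distinct and induce a path in `G`, in this order. -/
structure IsInducedPath (G : SimpleGraph V) (p : ℕ → V) (a b : ℕ) : Prop where
  injOn : Set.InjOn p (Finset.Ico a b)
  adj_iff : ∀ i ∈ Finset.Ico a b, ∀ j ∈ Finset.Ico a b,
    (G.Adj (p i) (p j) ↔ i + 1 = j ∨ j + 1 = i)

namespace IsInducedPath

variable {G : SimpleGraph V} {p : ℕ → V} {a b i : ℕ} {J : Finset ℕ}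

lemma mono {a' b' : ℕ} (h : IsInducedPath G p a b) (ha : a ≤ a') (hb : b' ≤ b) :
    IsInducedPath G p a' b' := by
  have hsub := Finset.Ico_subset_Ico ha hb
  exact ⟨h.injOn.mono (Finset.coe_subset.2 hsub),
    fun i hi j hj ↦ h.adj_iff i (hsub hi) j (hsub hj)⟩

lemma filter_adj (h : IsInducedPath G p a b) (hJ : J ⊆ Finset.Ico a b) (hi : i ∈ Finset.Ico a b) :
    (J.image p).filter (G.Adj (p i)) = (J.filter fun j ↦ i + 1 = j ∨ j + 1 = i).image p := by
  rw [Finset.filter_image]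
  congr 1
  exact Finset.filter_congr fun j hj ↦ h.adj_iff i hi j (hJ hj)

lemma filter_not_adj (h : IsInducedPath G p a b) (hJ : J ⊆ Finset.Ico a b)
    (hi : i ∈ Finset.Ico a b) :
    (J.image p).filter (¬G.Adj (p i) ·) =
      (J.filter fun j ↦ ¬(i + 1 = j ∨ j + 1 = i)).image p := by
  rw [Finset.filter_image]
  congr 1
  exact Finset.filter_congr fun j hj ↦ not_congr (h.adj_iff i hi j (hJ hj))

open Polynomial in
lemma dissocPoly_image_Ico (h : IsInducedPath G p a b) (hab : a + 1 < b) :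
    dissocPoly G ((Finset.Ico a b).image p) = dissocPoly G ((Finset.Ico (a + 1) b).image p) +
      X * dissocPoly G ((Finset.Ico (a + 2) b).image p) +
      X * (X * dissocPoly G ((Finset.Ico (a + 3) b).image p)) := by
  have hsub : Finset.Ico (a + 1) b ⊆ Finset.Ico a b := Finset.Ico_subset_Ico_left a.le_succ
  have hnot : p a ∉ (Finset.Ico (a + 1) b).image p := by
    intro hmem
    obtain ⟨i, hi, hpi⟩ := Finset.mem_image.1 hmem
    have := h.injOn (hsub hi) (by simp; omega) hpi
    grind
  have hnbr : {p (a + 1)} = ((Finset.Ico (a + 1) b).image p).filter (G.Adj (p a)) := by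
    rw [h.filter_adj hsub (by grind), ← Finset.image_singleton]
    congr 1
    grind
  have hsdiff : (Finset.Ico (a + 1) b).image p \ {p (a + 1)} =
      (Finset.Ico (a + 2) b).image p := by
    rw [← Finset.image_singleton, ← Finset.image_sdiff_of_injOn (h.injOn.mono hsub) (by grind)]
    congr 1
    grind
  have hfilter : ((Finset.Ico (a + 2) b).image p).filter (¬G.Adj (p (a + 1)) ·) =
      (Finset.Ico (a + 3) b).image p := by
    rw [h.filter_not_adj (Finset.Ico_subset_Ico_left (by omega)) (by grind)]
    congr 1
    grind
  have hinsert : (Finset.Ico a b).image p = insert (p a) ((Finset.Ico (a + 1) b).image p) := by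
    rw [← Finset.image_insert, Finset.insert_Ico_add_one_left_eq_Ico (by omega)]
  rw [hinsert, dissocPoly_insert hnot hnbr, isolatedRootPoly, Finset.sum_singleton, hsdiff, hfilter]

lemma dissocPoly_image_Ico_add {n : ℕ} (h : IsInducedPath G p a (a + n)) :
    dissocPoly G ((Finset.Ico a (a + n)).image p) = pathPoly n := by
  induction n using Nat.strong_induction_on generalizing a with
  | _ n ih =>
    have htail (i m : ℕ) (hm : i + 1 + m = n) :
        dissocPoly G ((Finset.Ico (a + (i + 1)) (a + n)).image p) = pathPoly m := by
      have hb : a + n = a + (i + 1) + m := by omega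
      rw [hb]
      exact ih m (by omega) (h.mono (by omega) hb.ge)
    match n with
    | 0 => simp [dissocPoly_empty, pathPoly]
    | 1 =>
      have hsingle := dissocPoly_insert (G := G) (Finset.notMem_empty (p a)) (R := ∅) (by simp)
      simpa [isolatedRootPoly, dissocPoly_empty, pathPoly] using hsingle
    | 2 =>
      have hempty : dissocPoly G ((Finset.Ico (a + 3) (a + 2)).image p) = 1 := by
        rw [Finset.Ico_eq_empty_of_le (by omega), Finset.image_empty, dissocPoly_empty]
      rw [h.dissocPoly_image_Ico (by omega), htail 0 1 rfl, htail 1 0 rfl, hempty]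
      simp only [pathPoly]
      ring
    | m + 3 =>
      rw [h.dissocPoly_image_Ico (by omega), htail 0 (m + 2) (by omega),
        htail 1 (m + 1) (by omega), htail 2 m (by omega), pathPoly]

end IsInducedPath

/-! ## Rooted forests -/

section RootedForest

variable {G H K : SimpleGraph V} {A B R : Finset V} {a b r r' v : V}

/-- The subgraph `G[A]`, kept on the whole vertex type with the vertices outside `A` isolated, so
that reachability inside different sets can be compared without coercions. -/
def inducedOn (G : SimpleGraph V) (A : Finset V) : SimpleGraph V :=
  (G.induce (A : Set V)).spanningCoe

lemma inducedOn_adj : (inducedOn G A).Adj a b ↔ a ∈ A ∧ b ∈ A ∧ G.Adj a b := by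
  simp only [inducedOn, SimpleGraph.map_adj, SimpleGraph.comap_adj]
  exact ⟨by rintro ⟨x, y, h, rfl, rfl⟩; exact ⟨x.2, y.2, h⟩,
    fun ⟨ha, hb, h⟩ ↦ ⟨⟨a, ha⟩, ⟨b, hb⟩, h, rfl, rfl⟩⟩

lemma inducedOn_le : inducedOn G A ≤ G :=
  fun _ _ h ↦ (inducedOn_adj.1 h).2.2

lemma inducedOn_mono (h : A ⊆ B) : inducedOn G A ≤ inducedOn G B := fun _ _ hab ↦
  let ⟨ha, hb, hG⟩ := inducedOn_adj.1 hab
  inducedOn_adj.2 ⟨h ha, h hb, hG⟩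

lemma reachable_inducedOn_or_exists_exit (hH : H ≤ G) (h : H.Reachable a b) (ha : a ∈ B) :
    (b ∈ B ∧ (inducedOn G B).Reachable a b) ∨
      ∃ r ∈ B, ∃ w ∉ B, (inducedOn G B).Reachable a r ∧ H.Adj r w := by
  rw [SimpleGraph.reachable_iff_reflTransGen] at h
  induction h with
  | refl => exact Or.inl ⟨ha, .refl a⟩
  | @tail x y _ hxy ih =>
    refine ih.elim (fun ⟨hx, hax⟩ ↦ ?_) Or.inr
    by_cases hy : y ∈ B
    · exact Or.inl ⟨hy, hax.trans (inducedOn_adj.2 ⟨hx, hy, hH hxy⟩).reachable⟩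
    · exact Or.inr ⟨x, hx, y, hy, hax, hxy⟩

lemma eq_of_isBridge_of_reachable (hbridge : H.IsBridge s(v, r)) (hadj : H.Adj v r')
    (hK : K ≤ H) (hv : ∀ a, ¬ K.Adj v a) (h : K.Reachable r r') : r = r' := by
  by_contra hne
  refine SimpleGraph.isBridge_iff.1 hbridge ?_
  have hK' : K ≤ H.deleteEdges {s(v, r)} := fun a b hab ↦ by
    refine SimpleGraph.deleteEdges_adj.2 ⟨hK hab, ?_⟩
    simp only [Set.mem_singleton_iff, Sym2.eq_iff]
    rintro (⟨rfl, -⟩ | ⟨-, rfl⟩)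
    exacts [hv _ hab, hv _ hab.symm]
  have hvr' : (H.deleteEdges {s(v, r)}).Adj v r' := by
    refine SimpleGraph.deleteEdges_adj.2 ⟨hadj, ?_⟩
    rw [Set.mem_singleton_iff, Sym2.congr_right]
    exact Ne.symm hne
  exact hvr'.reachable.trans (h.symm.mono hK')

/-- The vertices of the component of `v` in `G[A]`, for `v ∈ A`. -/
noncomputable def inducedComponent (G : SimpleGraph V) (A : Finset V) (v : V) : Finset V :=
  A.filter ((inducedOn G A).Reachable v)

lemma mem_inducedComponent_self (hv : v ∈ A) : v ∈ inducedComponent G A v :=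
  Finset.mem_filter.2 ⟨hv, .refl v⟩

lemma mem_inducedComponent_of_adj (ha : a ∈ inducedComponent G A v) (hb : b ∈ A) (hab : G.Adj a b) :
    b ∈ inducedComponent G A v :=
  let ⟨haA, hva⟩ := Finset.mem_filter.1 ha
  Finset.mem_filter.2 ⟨hb, hva.trans (inducedOn_adj.2 ⟨haA, hb, hab⟩).reachable⟩

/-- `R` selects one vertex (a root) in each component of the forest `G[A]`. -/
structure IsRootedForest (G : SimpleGraph V) (A R : Finset V) : Prop where
  subset : R ⊆ A
  isAcyclic : (inducedOn G A).IsAcyclic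
  existsUnique_root : ∀ a ∈ A, ∃! r, r ∈ R ∧ (inducedOn G A).Reachable a r

namespace IsRootedForest

lemma eq_empty (h : IsRootedForest G A ∅) : A = ∅ :=
  Finset.eq_empty_of_forall_notMem fun a ha ↦
    let ⟨_, ⟨hr, _⟩, _⟩ := h.existsUnique_root a ha
    Finset.notMem_empty _ hr

lemma sdiff_inducedComponent (h : IsRootedForest G A R) (hv : v ∈ R) :
    IsRootedForest G (A \ inducedComponent G A v) (R.erase v) where
  subset r hr := by
    obtain ⟨hrv, hrR⟩ := Finset.mem_erase.1 hr
    refine Finset.mem_sdiff.2 ⟨h.subset hrR, fun hrC ↦ hrv ?_⟩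
    exact (h.existsUnique_root r (h.subset hrR)).unique ⟨hrR, .refl r⟩
      ⟨hv, (Finset.mem_filter.1 hrC).2.symm⟩
  isAcyclic := h.isAcyclic.anti (inducedOn_mono Finset.sdiff_subset)
  existsUnique_root a ha := by
    obtain ⟨haA, haC⟩ := Finset.mem_sdiff.1 ha
    obtain ⟨r, ⟨hrR, har⟩, huniq⟩ := h.existsUnique_root a haA
    have hrv : r ≠ v := by
      rintro rfl
      exact haC (Finset.mem_filter.2 ⟨haA, har.symm⟩)
    refine ⟨r, ⟨Finset.mem_erase.2 ⟨hrv, hrR⟩, ?_⟩, fun r' ⟨hr', har'⟩ ↦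
      huniq r' ⟨Finset.mem_of_mem_erase hr', har'.mono (inducedOn_mono Finset.sdiff_subset)⟩⟩
    refine (reachable_inducedOn_or_exists_exit inducedOn_le har ha).elim And.right ?_
    rintro ⟨x, hx, w, hw, -, hxw⟩
    obtain ⟨hxA, hwA, hxw⟩ := inducedOn_adj.1 hxw
    have hwC : w ∈ inducedComponent G A v := by
      by_contra hwC
      exact hw (Finset.mem_sdiff.2 ⟨hwA, hwC⟩)
    exact absurd (mem_inducedComponent_of_adj hwC hxA hxw.symm) (Finset.mem_sdiff.1 hx).2

lemma of_forall_isBridge (hle : inducedOn G A ≤ H) (hH : H ≤ G) (hv : v ∉ A)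
    (hreach : ∀ a ∈ A, H.Reachable a v) (hexit : ∀ r ∈ A, ∀ w ∉ A, H.Adj r w → w = v)
    (hbridge : ∀ w, ∀ r ∈ A, H.Adj w r → H.IsBridge s(w, r)) :
    IsRootedForest G A (A.filter (H.Adj v)) where
  subset := Finset.filter_subset _ _
  isAcyclic := SimpleGraph.isAcyclic_iff_forall_adj_isBridge.2 fun w r hwr ↦
    (hbridge w r (inducedOn_adj.1 hwr).2.1 (hle hwr)).anti hle
  existsUnique_root a ha := by
    refine existsUnique_of_exists_of_unique ?_ fun r r' ⟨hr, har⟩ ⟨hr', har'⟩ ↦ ?_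
    · obtain ⟨hvA, -⟩ | ⟨r, hr, w, hw, har, hrw⟩ :=
        reachable_inducedOn_or_exists_exit hH (hreach a ha) ha
      · exact absurd hvA hv
      · obtain rfl := hexit r hr w hw hrw
        exact ⟨r, Finset.mem_filter.2 ⟨hr, hrw.symm⟩, har⟩
    · obtain ⟨hrA, hvr⟩ := Finset.mem_filter.1 hr
      exact eq_of_isBridge_of_reachable (hbridge v r hrA hvr) (Finset.mem_filter.1 hr').2 hle
        (fun b hb ↦ hv (inducedOn_adj.1 hb).1) (har.symm.trans har')

lemma erase_inducedComponent (h : IsRootedForest G A R) (hv : v ∈ A) :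
    IsRootedForest G ((inducedComponent G A v).erase v)
      (((inducedComponent G A v).erase v).filter (G.Adj v)) := by
  set C := inducedComponent G A v
  have hCA : C.erase v ⊆ A := (Finset.erase_subset _ _).trans (Finset.filter_subset _ _)
  have hroots : (C.erase v).filter (G.Adj v) = (C.erase v).filter ((inducedOn G A).Adj v) :=
    Finset.filter_congr fun r hr ↦
      ⟨fun hvr ↦ inducedOn_adj.2 ⟨hv, hCA hr, hvr⟩, fun hvr ↦ inducedOn_le hvr⟩
  rw [hroots]
  refine of_forall_isBridge (inducedOn_mono hCA) inducedOn_le (Finset.notMem_erase v C)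
    (fun a ha ↦ (Finset.mem_filter.1 (Finset.mem_of_mem_erase ha)).2.symm)
    (fun r hr w hw hrw ↦ ?_)
    (fun w r _ hwr ↦ SimpleGraph.isAcyclic_iff_forall_adj_isBridge.1 h.isAcyclic hwr)
  obtain ⟨-, hwA, hrw⟩ := inducedOn_adj.1 hrw
  by_contra hwv
  exact hw (Finset.mem_erase.2
    ⟨hwv, mem_inducedComponent_of_adj (Finset.mem_of_mem_erase hr) hwA hrw⟩)

lemma isForestTriple (h : IsRootedForest G A R) :
    IsForestTriple A.card (dissocPoly G A) (dissocPoly G (A \ R)) (isolatedRootPoly G A R) := by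
  induction hn : A.card using Nat.strong_induction_on generalizing A R with
  | _ n ih =>
    obtain rfl | ⟨v, hvR⟩ := R.eq_empty_or_nonempty
    · obtain rfl := h.eq_empty
      subst hn
      simpa [dissocPoly_empty, isolatedRootPoly] using IsForestTriple.empty
    have hvA := h.subset hvR
    set C := inducedComponent G A v
    have hCA : C ⊆ A := Finset.filter_subset _ _
    have hvC : v ∈ C := mem_inducedComponent_self hvA
    have hdisj : Disjoint C (A \ C) := Finset.disjoint_sdiff
    have hadj : ∀ a ∈ C, ∀ b ∈ A \ C, ¬ G.Adj a b := fun a ha b hb hab ↦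
      (Finset.mem_sdiff.1 hb).2 (mem_inducedComponent_of_adj ha (Finset.mem_sdiff.1 hb).1 hab)
    have hcard : (C.erase v).card + 1 + (A \ C).card = n := by
      rw [Finset.card_erase_add_one hvC, ← hn, add_comm, Finset.card_sdiff_add_card_eq_card hCA]
    have hforest : IsRootedForest G (A \ C) (R.erase v) := h.sdiff_inducedComponent hvR
    have htree : IsRootedForest G (C.erase v) ((C.erase v).filter (G.Adj v)) :=
      h.erase_inducedComponent hvA
    have key := (ih _ (by omega) htree rfl).root.union (ih _ (by omega) hforest rfl)
    have hv := Finset.notMem_erase v C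
    have hvC' : {v} ⊆ C := Finset.singleton_subset_iff.2 hvC
    rw [hcard, ← dissocPoly_insert hv rfl, ← isolatedRootPoly_insert hv rfl,
      Finset.insert_erase hvC, ← Finset.sdiff_singleton_eq_erase,
      ← dissocPoly_union hdisj hadj,
      ← dissocPoly_union_sdiff hdisj hadj hvC' hforest.subset,
      ← isolatedRootPoly_union hdisj hadj hvC' hforest.subset,
      Finset.union_sdiff_of_subset hCA, ← Finset.insert_eq, Finset.insert_erase hvR] at key
    exact key

end IsRootedForest

end RootedForest

/-! ## Potted cycles -/

section PottedCycle

open Polynomial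

variable {G : SimpleGraph V} {p : ℕ → V} {k l i j : ℕ} {u : V}

lemma isBridge_of_notMem_edges [Finite V] (hconn : G.Connected)
    (hcard : G.edgeSet.ncard = Nat.card V) {c : G.Walk u u} (hc : c.IsCycle) {v w : V}
    (hvw : G.Adj v w) (hnot : s(v, w) ∉ c.edges) : G.IsBridge s(v, w) := by
  by_contra hbridge
  have hedges : ∀ e ∈ c.edges, e ∉ ({s(v, w)} : Set (Sym2 V)) :=
    fun e he h ↦ hnot (Set.mem_singleton_iff.1 h ▸ he)
  have htree : (G.deleteEdges {s(v, w)}).IsTree := by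
    refine SimpleGraph.isTree_iff_connected_and_card.2
      ⟨hconn.connected_delete_edge_of_not_isBridge hbridge, ?_⟩
    rw [Nat.card_coe_set_eq, SimpleGraph.edgeSet_deleteEdges, ← hcard]
    exact Set.ncard_sdiff_singleton_add_one (G.mem_edgeSet.2 hvw) (Set.toFinite _)
  exact htree.isAcyclic _ (hc.toDeleteEdges G {s(v, w)} hedges)

/-- `p 0, p 1, …, p k = p 0` runs once around a cycle of length `k` whose vertices other than
`p 0` have degree 2 in `G`, and every edge of `G` leading to a vertex off the cycle is a bridge. -/
structure IsPottedCycle (G : SimpleGraph V) (k : ℕ) (p : ℕ → V) : Prop where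
  three_le : 3 ≤ k
  map_length : p k = p 0
  injOn : Set.InjOn p (Finset.range k)
  adj_iff_interior : ∀ i ∈ Finset.Ico 1 k, ∀ x, G.Adj (p i) x ↔ x = p (i - 1) ∨ x = p (i + 1)
  isBridge : ∀ v, ∀ w ∉ (Finset.range k).image p, G.Adj v w → G.IsBridge s(v, w)

lemma IsPotted.exists_isPottedCycle [Finite V] (hG : IsPotted G k) :
    ∃ p, IsPottedCycle G k p := by
  obtain ⟨hconn, hcard, v, c₀, hc₀, rfl, u, ⟨hu, -⟩, huniq⟩ := hG
  have hc := hc₀.rotate hu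
  rw [← c₀.length_rotate u hu]
  set c := c₀.rotate u hu
  have hlen := hc.three_le_length
  have hinj : Set.InjOn c.getVert (Finset.range c.length) :=
    hc.getVert_injOn'.mono fun i hi ↦ Nat.le_sub_one_of_lt (Finset.mem_range.1 hi)
  refine ⟨c.getVert, hlen, by simp only [c.getVert_length, c.getVert_zero], hinj, ?_, ?_⟩
  · intro i hi x
    obtain ⟨hi1, hik⟩ := Finset.mem_Ico.1 hi
    have hi0 : i ≠ 0 := Nat.one_le_iff_ne_zero.1 hi1
    have hdeg : ¬ 2 < (G.neighborSet (c.getVert i)).ncard := fun h ↦ by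
      have hiu : c.getVert i = c.getVert 0 := (huniq _
        ⟨(c₀.mem_support_rotate_iff u hu).1 (c.getVert_mem_support i), h⟩).trans
          c.getVert_zero.symm
      exact hi0 (hinj (Finset.mem_coe.2 (Finset.mem_range.2 hik))
        (Finset.mem_coe.2 (Finset.mem_range.2 (by omega))) hiu)
    have hcycle := hc.ncard_neighborSet_toSubgraph_eq_two (c.getVert_mem_support i)
    rw [← SimpleGraph.mem_neighborSet, ← Set.eq_of_subset_of_ncard_le
      (c.toSubgraph.neighborSet_subset _) (by omega) (Set.toFinite _),
      hc.neighborSet_toSubgraph_internal hi0 hik]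
    rfl
  · intro v w hw hvw
    refine isBridge_of_notMem_edges hconn hcard hc hvw fun hmem ↦ hw ?_
    obtain ⟨i, rfl, hi⟩ := SimpleGraph.Walk.mem_support_iff_exists_getVert.1
      (c.snd_mem_support_of_mem_edges hmem)
    obtain hi | rfl := hi.lt_or_eq
    · exact Finset.mem_image_of_mem _ (Finset.mem_range.2 hi)
    · exact Finset.mem_image.2 ⟨0, Finset.mem_range.2 (by omega), by
        rw [c.getVert_zero, c.getVert_length]⟩

namespace IsPottedCycle

lemma apply_inj (h : IsPottedCycle G k p) (hi : i < k) (hj : j < k) : p i = p j ↔ i = j :=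
  h.injOn.eq_iff (Finset.mem_coe.2 (Finset.mem_range.2 hi))
    (Finset.mem_coe.2 (Finset.mem_range.2 hj))

lemma adj_zero_iff (h : IsPottedCycle G k p) (hi : i ∈ Finset.Ico 1 k) :
    G.Adj (p 0) (p i) ↔ i = 1 ∨ i + 1 = k := by
  have hk := h.three_le
  obtain ⟨hi1, hik⟩ := Finset.mem_Ico.1 hi
  rw [G.adj_comm, h.adj_iff_interior i hi, h.apply_inj (by omega) (by omega)]
  obtain hik' | hik' := (Nat.lt_iff_add_one_le.1 hik).lt_or_eq
  · rw [h.apply_inj (by omega) hik']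
    omega
  · simp only [hik', h.map_length, or_true]

lemma isInducedPath (h : IsPottedCycle G k p) : IsInducedPath G p 1 k where
  injOn := h.injOn.mono fun i hi ↦ by
    simp only [Finset.coe_Ico, Set.mem_Ico, Finset.coe_range, Set.mem_Iio] at hi ⊢
    exact hi.2
  adj_iff i hi j hj := by
    obtain ⟨hi1, hik⟩ := Finset.mem_Ico.1 hi
    obtain ⟨hj1, hjk⟩ := Finset.mem_Ico.1 hj
    rw [h.adj_iff_interior i hi, h.apply_inj hjk (by omega)]
    obtain hik' | hik' := (Nat.lt_iff_add_one_le.1 hik).lt_or_eq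
    · rw [h.apply_inj hjk hik']
      omega
    · rw [hik', h.map_length, h.apply_inj hjk (by omega)]
      omega

lemma image_range (h : IsPottedCycle G k p) :
    (Finset.range k).image p = insert (p 0) ((Finset.Ico 1 k).image p) := by
  have hk : 0 < k := three_pos.trans_le h.three_le
  rw [← Finset.image_insert, Finset.range_eq_Ico, ← Finset.insert_Ico_add_one_left_eq_Ico hk,
    zero_add]

lemma zero_notMem_image_Ico (h : IsPottedCycle G k p) : p 0 ∉ (Finset.Ico 1 k).image p := by
  simp only [Finset.mem_image, Finset.mem_Ico, not_exists, not_and]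
  intro i hi hi0
  have := (h.apply_inj hi.2 (by omega)).1 hi0
  omega

lemma mem_image_range_of_adj (h : IsPottedCycle G k p) {v w : V}
    (hv : v ∈ (Finset.Ico 1 k).image p) (hvw : G.Adj v w) : w ∈ (Finset.range k).image p := by
  obtain ⟨i, hi, rfl⟩ := Finset.mem_image.1 hv
  obtain ⟨hi1, hik⟩ := Finset.mem_Ico.1 hi
  obtain rfl | rfl := (h.adj_iff_interior i hi w).1 hvw
  · exact Finset.mem_image_of_mem _ (Finset.mem_range.2 (by omega))
  obtain hik' | rfl := (Nat.lt_iff_add_one_le.1 hik).lt_or_eq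
  · exact Finset.mem_image_of_mem _ (Finset.mem_range.2 hik')
  · exact Finset.mem_image.2 ⟨0, Finset.mem_range.2 (by omega), h.map_length.symm⟩

lemma sdiff_filter_adj (h : IsPottedCycle G k p) :
    (Finset.Ico 1 k).image p \ ((Finset.Ico 1 k).image p).filter (G.Adj (p 0)) =
      (Finset.Ico 2 (k - 1)).image p := by
  rw [← Finset.filter_not, Finset.filter_image]
  congr 1
  ext i
  simp only [Finset.mem_filter, Finset.mem_Ico]
  refine ⟨fun ⟨hi, hadj⟩ ↦ ?_, fun hi ↦ ⟨by omega, ?_⟩⟩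
  · rw [h.adj_zero_iff (Finset.mem_Ico.2 hi)] at hadj
    omega
  · rw [h.adj_zero_iff (Finset.mem_Ico.2 (by omega))]
    omega

lemma filter_adj_zero (h : IsPottedCycle G k p) :
    ((Finset.Ico 1 k).image p).filter (G.Adj (p 0)) = {p 1, p (k - 1)} := by
  have hk := h.three_le
  rw [Finset.filter_image, ← Finset.image_singleton p (k - 1), ← Finset.image_insert]
  congr 1
  ext i
  simp only [Finset.mem_filter, Finset.mem_insert, Finset.mem_singleton]
  refine ⟨fun ⟨hi, hadj⟩ ↦ ?_, fun hi ↦ ?_⟩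
  · rw [h.adj_zero_iff hi] at hadj
    omega
  · have hi' : i ∈ Finset.Ico 1 k := Finset.mem_Ico.2 (by omega)
    exact ⟨hi', (h.adj_zero_iff hi').2 (by omega)⟩

lemma isolatedRootPoly_eq (h : IsPottedCycle G (l + 4) p) :
    isolatedRootPoly G ((Finset.Ico 1 (l + 4)).image p)
      (((Finset.Ico 1 (l + 4)).image p).filter (G.Adj (p 0))) = 2 * X * pathPoly l := by
  have hpath := h.isInducedPath
  have hsub : Finset.Ico 2 (l + 3) ⊆ Finset.Ico 1 (l + 4) :=
    Finset.Ico_subset_Ico (by omega) (by omega)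
  have hfirst : ((Finset.Ico 2 (l + 3)).image p).filter (¬ G.Adj (p 1) ·) =
      (Finset.Ico 3 (3 + l)).image p := by
    rw [hpath.filter_not_adj hsub (Finset.mem_Ico.2 (by omega))]
    congr 1
    ext i
    simp only [Finset.mem_filter, Finset.mem_Ico]
    omega
  have hlast : ((Finset.Ico 2 (l + 3)).image p).filter (¬ G.Adj (p (l + 3)) ·) =
      (Finset.Ico 2 (2 + l)).image p := by
    rw [hpath.filter_not_adj hsub (Finset.mem_Ico.2 (by omega))]
    congr 1
    ext i
    simp only [Finset.mem_filter, Finset.mem_Ico]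
    omega
  have hne : p 1 ≠ p (l + 3) := fun hp ↦ by
    have := (h.apply_inj (by omega) (by omega)).1 hp
    omega
  rw [isolatedRootPoly, h.sdiff_filter_adj, h.filter_adj_zero, Nat.add_one_sub_one (l + 3),
    Finset.sum_pair hne, hfirst, hlast,
    (hpath.mono (by omega) (by omega)).dissocPoly_image_Ico_add,
    (hpath.mono (by omega) (by omega)).dissocPoly_image_Ico_add]
  ring

lemma card_compl_image_range [Fintype V] (h : IsPottedCycle G k p) :
    ((Finset.range k).image p)ᶜ.card = Fintype.card V - k := by
  rw [Finset.card_compl, Finset.card_image_of_injOn h.injOn, Finset.card_range]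

lemma le_card [Fintype V] (h : IsPottedCycle G k p) : k ≤ Fintype.card V := by
  rw [← Finset.card_range k, ← Finset.card_image_of_injOn h.injOn]
  exact Finset.card_le_univ _

lemma isRootedForest_compl [Fintype V] (h : IsPottedCycle G k p) (hconn : G.Connected) :
    IsRootedForest G ((Finset.range k).image p)ᶜ
      (((Finset.range k).image p)ᶜ.filter (G.Adj (p 0))) := by
  refine .of_forall_isBridge inducedOn_le le_rfl ?_ (fun a _ ↦ hconn.preconnected a (p 0))
    (fun r hr w hw hrw ↦ ?_) fun w r hr hwr ↦ h.isBridge w r (Finset.mem_compl.1 hr) hwr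
  · rw [Finset.mem_compl, not_not, h.image_range]
    exact Finset.mem_insert_self _ _
  · rw [Finset.mem_compl, not_not, h.image_range, Finset.mem_insert] at hw
    exact hw.resolve_right fun hw ↦
      Finset.mem_compl.1 hr (h.mem_image_range_of_adj hw hrw.symm)

lemma exists_dissocPoly_univ_eq [Fintype V] (h : IsPottedCycle G (l + 4) p)
    (hconn : G.Connected) :
    ∃ P Y Z : ℕ[X], IsForestTriple (Fintype.card V - (l + 4)) P Y Z ∧
      dissocPoly G Finset.univ = pottedPoly l P Y Z := by
  set C := (Finset.Ico 1 (l + 4)).image p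
  set F := ((Finset.range (l + 4)).image p)ᶜ
  have hinsert : insert (p 0) (F ∪ C) = Finset.univ := by
    rw [← Finset.union_insert, ← h.image_range]
    exact (Finset.union_comm _ _).trans (Finset.union_compl _)
  have hdisj : Disjoint F C := by
    refine Finset.disjoint_left.2 fun x hx hxC ↦ Finset.mem_compl.1 hx ?_
    rw [h.image_range]
    exact Finset.mem_insert_of_mem hxC
  have hadj : ∀ a ∈ F, ∀ b ∈ C, ¬ G.Adj a b := fun a ha b hb hab ↦
    Finset.mem_compl.1 ha (h.mem_image_range_of_adj hb hab.symm)
  have hnot : p 0 ∉ F ∪ C := by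
    rw [Finset.mem_union, not_or]
    refine ⟨?_, h.zero_notMem_image_Ico⟩
    rw [Finset.mem_compl, not_not, h.image_range]
    exact Finset.mem_insert_self _ _
  have hpath : dissocPoly G C = pathPoly (l + 3) := by
    have := h.isInducedPath.mono (b' := 1 + (l + 3)) le_rfl (by omega)
    rw [← this.dissocPoly_image_Ico_add, add_comm 1]
  have hinner : dissocPoly G ((Finset.Ico 2 (l + 4 - 1)).image p) = pathPoly (l + 1) := by
    have := h.isInducedPath.mono (a' := 2) (b' := 2 + (l + 1)) (by omega) (by omega)
    rw [← this.dissocPoly_image_Ico_add]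
    congr 3
    omega
  refine ⟨_, _, _, h.card_compl_image_range ▸ (h.isRootedForest_compl hconn).isForestTriple, ?_⟩
  have hsub := Finset.filter_subset (G.Adj (p 0))
  rw [← hinsert, dissocPoly_insert hnot (Finset.filter_union _ _ _).symm,
    dissocPoly_union hdisj hadj, dissocPoly_union_sdiff hdisj hadj (hsub F) (hsub C),
    isolatedRootPoly_union hdisj hadj (hsub F) (hsub C), h.sdiff_filter_adj, hpath, hinner,
    h.isolatedRootPoly_eq, pottedPoly]

end IsPottedCycle

end PottedCycle

/-! ## Bounds on the leading coefficient -/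

section Bounds

open Polynomial

/-- The bound on the number of maximum dissociation sets of a potted graph of order `k + 3 * s + e`
with a cycle of length `k = 3 * t + 1`, where `e < 3`. -/
def pottedBound (t s : ℕ) : ℕ → ℚ
  | 0 => max ((t + 1) * (t + 2) / 2 * 3 ^ s + t * (t + 2) + t * s)
      ((3 * t + 1) * (t + 2) / 6 * 3 ^ s + t + (t + 1) * (t + 2) / 2 * (s + 1))
  | 1 => max ((t + 1) * (t + 2) / 2 * 3 ^ s + t)
      ((3 * t + 1) * (t + 2) / 6 * 3 ^ s + (t + 1) * (t + 2) / 2)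
  | _ => (t + 1) * (t + 2) / 2 * 3 ^ s

variable {n s e x y z u v : ℕ} {P Y Z : ℕ[X]}

lemma mul_three_pow_le_pottedBound (t s e : ℕ) :
    ((t : ℚ) + 1) * (t + 2) / 2 * 3 ^ s ≤ pottedBound t s e := by
  match e with
  | 0 => exact le_max_of_le_left <| by rw [add_assoc]; exact le_add_of_nonneg_right (by positivity)
  | 1 => exact le_max_of_le_left (le_add_of_nonneg_right t.cast_nonneg)
  | _ + 2 => exact le_rfl

lemma mul_le_pottedBound {a : ℕ} (t e : ℕ) (hx : x ≤ 3 ^ a) (ha : a ≤ s) :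
    ((t : ℚ) + 1) * (t + 2) / 2 * x ≤ pottedBound t s e := by
  refine le_trans ?_ (mul_three_pow_le_pottedBound t s e)
  have : (x : ℚ) ≤ 3 ^ s := by exact_mod_cast hx.trans (Nat.pow_le_pow_right (by norm_num) ha)
  gcongr

lemma HeavyRoots.le_pottedBound (t : ℕ) (h : HeavyRoots n x u v) (hn : n = 3 * s + e)
    (he : e < 3) : ((t : ℚ) + 1) * (t + 2) / 2 * x ≤ pottedBound t s e := by
  obtain ⟨m, f, hm, hf, -, hx, -⟩ := h
  exact mul_le_pottedBound t e hx (by omega)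

lemma LightRoots.le_pottedBound (t : ℕ) (h : LightRoots n x u z) (hn : n = 3 * s + e)
    (he : e < 3) : ((t : ℚ) + 1) * (t + 2) / 2 * x + t * z ≤ pottedBound t s e := by
  obtain ⟨m, f, hm, hf, -, -, hx, hzx, -⟩ := h.exists_bounds
  have hxq : (x : ℚ) ≤ 3 ^ m := by exact_mod_cast hx
  have hzxq : (z : ℚ) + x ≤ 3 ^ m + pairSlack f := by exact_mod_cast hzx
  have hweight : (0 : ℚ) ≤ (t + 1) * (t + 2) / 2 - t := by
    have : (0 : ℚ) ≤ t ^ 2 + t + 2 := by positivity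
    linarith
  have key : ((t : ℚ) + 1) * (t + 2) / 2 * x + t * z ≤
      (t + 1) * (t + 2) / 2 * 3 ^ m + t * pairSlack f := by
    have := mul_le_mul_of_nonneg_left hxq hweight
    have := mul_le_mul_of_nonneg_left hzxq (t.cast_nonneg (α := ℚ))
    linarith
  refine key.trans ?_
  by_cases hf0 : f = 0
  · obtain ⟨rfl, rfl, rfl⟩ : f = 0 ∧ e = 1 ∧ m = s := by omega
    refine le_max_of_le_left ?_
    simp [pairSlack]
  · rw [pairSlack, if_neg hf0, Nat.cast_zero, mul_zero, add_zero]
    exact_mod_cast mul_le_pottedBound t e le_rfl (by omega : m ≤ s)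

section FreeBounds

variable {a t : ℕ}

lemma free_tree_le_pottedBound (he : e < 3) (hy : y ≤ 3 ^ a)
    (hz : y + z ≤ 3 ^ a + pairSlack e) (hx : x ≤ 3 ^ a + tripleSlack e a) :
    ((t : ℚ) + 1) * (t + 2) / 2 * x + t * (t + 2) * y + t * z ≤ pottedBound t (a + 1) e := by
  have hyq : (y : ℚ) ≤ 3 ^ a := by exact_mod_cast hy
  have hzq : (y : ℚ) + z ≤ 3 ^ a + pairSlack e := by exact_mod_cast hz
  have hxq : (x : ℚ) ≤ 3 ^ a + tripleSlack e a := by exact_mod_cast hx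
  have key : ((t : ℚ) + 1) * (t + 2) / 2 * x + t * (t + 2) * y + t * z ≤
      (t + 1) * (t + 2) / 2 * (3 ^ a + tripleSlack e a) + t * (t + 1) * 3 ^ a +
        t * (3 ^ a + pairSlack e) := by
    calc _ = ((t : ℚ) + 1) * (t + 2) / 2 * x + t * (t + 1) * y + t * (y + z) := by ring
      _ ≤ _ := by gcongr
  refine key.trans ?_
  interval_cases e
  · refine le_max_of_le_right (le_of_eq ?_)
    simp only [pairSlack, tripleSlack, reduceIte]
    push_cast
    ring
  · refine le_max_of_le_right (le_of_eq ?_)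
    simp only [pairSlack, tripleSlack, reduceIte, one_ne_zero]
    push_cast
    ring
  · have : (0 : ℚ) ≤ (t + 2) * 3 ^ a := by positivity
    simp only [pairSlack, tripleSlack, pottedBound, reduceIte, OfNat.ofNat_ne_zero,
      OfNat.ofNat_ne_one, Nat.cast_zero, pow_succ]
    linarith

lemma free_forest_le_pottedBound (he : e < 3) (hy : 1 ≤ y)
    (hx : x + 2 * y ≤ 3 * 3 ^ a + 2 * pairSlack e)
    (hz : x + 2 * y + z ≤ 3 * 3 ^ a + tripleSlack e (a + 1)) :
    ((t : ℚ) + 1) * (t + 2) / 2 * x + t * (t + 2) * y + t * z ≤ pottedBound t (a + 1) e := by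
  have hyq : (1 : ℚ) ≤ y := by exact_mod_cast hy
  have hxq : (x : ℚ) + 2 * y ≤ 3 * 3 ^ a + 2 * pairSlack e := by exact_mod_cast hx
  have hzq : (x : ℚ) + 2 * y + z ≤ 3 * 3 ^ a + tripleSlack e (a + 1) := by exact_mod_cast hz
  have hweight : (0 : ℚ) ≤ (t + 1) * (t + 2) / 2 - t := by
    have : (0 : ℚ) ≤ t ^ 2 + t + 2 := by positivity
    linarith
  have key : ((t : ℚ) + 1) * (t + 2) / 2 * x + t * (t + 2) * y + t * z ≤
      ((t + 1) * (t + 2) / 2 - t) * (3 * 3 ^ a + 2 * pairSlack e) +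
        t * (3 * 3 ^ a + tripleSlack e (a + 1)) - (t + 2) * 1 := by
    calc _ = (((t : ℚ) + 1) * (t + 2) / 2 - t) * (x + 2 * y) + t * (x + 2 * y + z) -
          (t + 2) * y := by ring
      _ ≤ _ := by gcongr
  refine key.trans ?_
  interval_cases e
  · refine le_max_of_le_left (le_of_eq ?_)
    simp only [pairSlack, tripleSlack, reduceIte]
    push_cast
    ring
  · refine le_max_of_le_left ?_
    simp only [pairSlack, tripleSlack, reduceIte, one_ne_zero, Nat.cast_zero, Nat.cast_one,
      pow_succ]
    linarith [t.cast_nonneg (α := ℚ)]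
  · simp only [pairSlack, tripleSlack, pottedBound, reduceIte, OfNat.ofNat_ne_zero,
      OfNat.ofNat_ne_one, Nat.cast_zero, pow_succ]
    linarith [t.cast_nonneg (α := ℚ)]

end FreeBounds

lemma FreeRoots.le_pottedBound (t : ℕ) (h : FreeRoots n x y z) (hn : n = 3 * s + e)
    (he : e < 3) :
    ((t : ℚ) + 1) * (t + 2) / 2 * x + t * (t + 2) * y + t * z ≤ pottedBound t s e := by
  obtain ⟨rfl, rfl, rfl, rfl⟩ | ⟨a, f, hn', hf, hy, hz, hx⟩ := h.bounds
  · obtain ⟨rfl, rfl⟩ : s = 0 ∧ e = 0 := by omega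
    refine le_max_of_le_left (le_of_eq ?_)
    push_cast
    ring
  obtain ⟨rfl, rfl⟩ : s = a + 1 ∧ f = e := by omega
  refine hx.elim (free_tree_le_pottedBound he hy hz) fun hx ↦
    free_forest_le_pottedBound he h.one_le hx ?_
  have := h.add_two_mul_add_le hn he
  rwa [pow_succ'] at this

lemma HasForestProfile.leadingCoeff_pottedPoly_le (r : ℕ) (h : HasForestProfile n P Y Z)
    (hn : n = 3 * s + e) (he : e < 3) :
    ((pottedPoly (3 * r) P Y Z).leadingCoeff : ℚ) ≤ pottedBound (r + 1) s e := by
  have hpos : 0 < (r + 3).choose 2 := Nat.choose_pos (by omega)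
  rcases h with ⟨h, hP, hY, hZ⟩ | ⟨h, hP, hY, hZ⟩ | ⟨h, hP, hY, hZ⟩
  · have hy := Nat.pos_of_ne_zero (Nat.one_le_iff_ne_zero.1 h.one_le)
    rw [(isTopCoeff_pottedPoly_of_free r hP hY hZ).leadingCoeff_eq (by positivity)]
    refine le_trans (le_of_eq ?_) (h.le_pottedBound (r + 1) hn he)
    push_cast [Nat.cast_choose_two]
    ring
  · obtain ⟨m, f, -, -, hz, -⟩ := h.2
    rw [(isTopCoeff_pottedPoly_of_light r hP hY hZ).leadingCoeff_eq (by positivity)]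
    refine le_trans (le_of_eq ?_) (h.le_pottedBound (r + 1) hn he)
    push_cast [Nat.cast_choose_two]
    ring
  · obtain ⟨m, f, -, -, hx, -⟩ := id h
    rw [(isTopCoeff_pottedPoly_of_heavy r hP hY hZ).leadingCoeff_eq (by positivity)]
    refine le_trans (le_of_eq ?_) (h.le_pottedBound (r + 1) hn he)
    push_cast [Nat.cast_choose_two]
    ring

end Bounds

lemma IsPotted.numMaxDissoc_le [Fintype V] {G : SimpleGraph V} {r s e : ℕ}
    (hG : IsPotted G (3 * r + 4)) (hcard : Fintype.card V = 3 * r + 4 + (3 * s + e))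
    (he : e < 3) : (numMaxDissoc G : ℚ) ≤ pottedBound (r + 1) s e := by
  obtain ⟨p, hp⟩ := hG.exists_isPottedCycle
  obtain ⟨P, Y, Z, hforest, hpoly⟩ := hp.exists_dissocPoly_univ_eq hG.1
  rw [numMaxDissoc, ← Finset.coe_univ, numMaxDissocOn_eq_leadingCoeff, hpoly]
  exact hforest.hasForestProfile.leadingCoeff_pottedPoly_le r (by omega) he

theorem potted_bound_k_mod3_eq_1_general {V : Type*} [Fintype V] (G : SimpleGraph V) (n k : ℕ)
    (hn : Fintype.card V = n) (hkmod : k % 3 = 1) (hG : IsPotted G k) :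
    (n % 3 = 0 → (numMaxDissoc G : ℚ) ≤
        1 / 18 * ((k : ℚ) + 2) * ((k : ℚ) + 5) * 3 ^ ((n - k - 2) / 3)) ∧
    (n % 3 = 1 → (numMaxDissoc G : ℚ) ≤
        max (1 / 18 * ((k : ℚ) + 2) * ((k : ℚ) + 5) * 3 ^ ((n - k) / 3)
              + 1 / 9 * ((n : ℚ) + 5) * ((k : ℚ) - 1))
            (1 / 18 * (k : ℚ) * ((k : ℚ) + 5) * 3 ^ ((n - k) / 3) + 1 / 3 * ((k : ℚ) - 1)
              + 1 / 18 * ((k : ℚ) + 2) * ((k : ℚ) + 5) * (((n : ℚ) - k) / 3 + 1))) ∧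
    (n % 3 = 2 → (numMaxDissoc G : ℚ) ≤
        max (1 / 18 * (k : ℚ) * ((k : ℚ) + 5) * 3 ^ ((n - k - 1) / 3)
              + 1 / 18 * ((k : ℚ) + 2) * ((k : ℚ) + 5))
            (1 / 18 * ((k : ℚ) + 2) * ((k : ℚ) + 5) * 3 ^ ((n - k - 1) / 3)
              + 1 / 3 * ((k : ℚ) - 1))) := by
  obtain ⟨p, hp⟩ := hG.exists_isPottedCycle
  have hkn := hp.le_card
  obtain ⟨r, rfl⟩ : ∃ r, k = 3 * r + 4 := ⟨k / 3 - 1, by have := hp.three_le; omega⟩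
  obtain ⟨s, e, he, rfl⟩ : ∃ s e, e < 3 ∧ n = 3 * r + 4 + (3 * s + e) :=
    ⟨(n - (3 * r + 4)) / 3, (n - (3 * r + 4)) % 3, by omega, by omega⟩
  have hbound := hG.numMaxDissoc_le hn he
  refine ⟨fun hmod ↦ ?_, fun hmod ↦ ?_, fun hmod ↦ ?_⟩
  · obtain rfl : e = 2 := by omega
    rw [show (3 * r + 4 + (3 * s + 2) - (3 * r + 4) - 2) / 3 = s by omega]
    exact hbound.trans_eq (by simp only [pottedBound]; push_cast; ring)
  · obtain rfl : e = 0 := by omega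
    rw [show (3 * r + 4 + (3 * s + 0) - (3 * r + 4)) / 3 = s by omega]
    exact hbound.trans_eq (congrArg₂ max (by push_cast; ring) (by push_cast; ring))
  · obtain rfl : e = 1 := by omega
    rw [show (3 * r + 4 + (3 * s + 1) - (3 * r + 4) - 1) / 3 = s by omega, max_comm]
    exact hbound.trans_eq (congrArg₂ max (by push_cast; ring) (by push_cast; ring))

theorem potted_bound_k_mod3_eq_1 {V : Type*} [Fintype V] (G : SimpleGraph V) (n k : ℕ)
    (hn : Fintype.card V = n) (hk0 : 0 < k) (hk4 : 4 ≤ k) (hkmod : k % 3 = 1)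
    (hnk : k + 3 ≤ n) (hG : IsPotted G k) :
    (n % 3 = 0 → (numMaxDissoc G : ℚ) ≤
        1 / 18 * ((k : ℚ) + 2) * ((k : ℚ) + 5) * 3 ^ ((n - k - 2) / 3)) ∧
    (n % 3 = 1 → (numMaxDissoc G : ℚ) ≤
        max (1 / 18 * ((k : ℚ) + 2) * ((k : ℚ) + 5) * 3 ^ ((n - k) / 3)
              + 1 / 9 * ((n : ℚ) + 5) * ((k : ℚ) - 1))
            (1 / 18 * (k : ℚ) * ((k : ℚ) + 5) * 3 ^ ((n - k) / 3) + 1 / 3 * ((k : ℚ) - 1)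
              + 1 / 18 * ((k : ℚ) + 2) * ((k : ℚ) + 5) * (((n : ℚ) - k) / 3 + 1))) ∧
    (n % 3 = 2 → (numMaxDissoc G : ℚ) ≤
        max (1 / 18 * (k : ℚ) * ((k : ℚ) + 5) * 3 ^ ((n - k - 1) / 3)
              + 1 / 18 * ((k : ℚ) + 2) * ((k : ℚ) + 5))
            (1 / 18 * ((k : ℚ) + 2) * ((k : ℚ) + 5) * 3 ^ ((n - k - 1) / 3)
              + 1 / 3 * ((k : ℚ) - 1))) :=
  potted_bound_k_mod3_eq_1_general G n k hn hkmod hG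
end

section
/- Define f(x) = 3^{x−1} + x + 1 and g(x) = 3^{x−1}. Let t, k₁, k₂, …, k_i be positive integers with k₁ + k₂ + ⋯ + k_i = t and i ≥ 2. Then f(k₁)·f(k₂)⋯f(k_i) + 2·g(k₁)·g(k₂)⋯g(k_i) < f(t) + 2·g(t). -/
/-- `f(x) = 3^{x-1} + x + 1`. -/
noncomputable def f (x : ℕ) : ℝ := 3 ^ (x - 1) + x + 1

/-- `g(x) = 3^{x-1}`. -/
noncomputable def g (x : ℕ) : ℝ := 3 ^ (x - 1)

/-!
For `x ≥ 1` one has `f x ≤ 3 * g x = 3 ^ x`, and already `f x ≤ 2 * g x` once `x ≥ 2`. If every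
part `k j` equals `1`, then `∏ f + 2 ∏ g = 3 ^ t + 2` exactly. Otherwise a part `≥ 2` saves a
factor `2 / 3` in the product of the `f (k j)`, while two parts already make the product of the
`g (k j)` at most `3 ^ t / 9`, for a total of at most `8 / 9 * 3 ^ t`. The right-hand side is
`3 ^ t + t + 1`, which exceeds `3 ^ t + 2` because `t ≥ 2`.
-/

lemma f_one : f 1 = 3 := by norm_num [f]

lemma g_one : g 1 = 1 := by norm_num [g]

lemma f_nonneg (x : ℕ) : 0 ≤ f x := by unfold f; positivity

lemma g_nonneg (x : ℕ) : 0 ≤ g x := by unfold g; positivity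

lemma three_mul_g {x : ℕ} (hx : 1 ≤ x) : 3 * g x = 3 ^ x :=
  mul_pow_sub_one (by lia) 3

lemma f_add_two_mul_g {x : ℕ} (hx : 1 ≤ x) : f x + 2 * g x = 3 ^ x + x + 1 := by
  rw [← three_mul_g hx, f, g]
  ring

lemma f_le_two_mul_g {x : ℕ} (hx : 2 ≤ x) : f x ≤ 2 * g x := by
  obtain ⟨n, rfl⟩ := Nat.exists_eq_add_of_le' hx
  have bernoulli : 1 + ((n + 1 : ℕ) : ℝ) * 2 ≤ 3 ^ (n + 1) :=
    (one_add_mul_le_pow (by norm_num) (n + 1)).trans_eq (by norm_num)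
  simp only [f, g, Nat.add_succ_sub_one]
  push_cast at bernoulli ⊢
  linarith only [bernoulli, n.cast_nonneg (α := ℝ)]

lemma f_le_three_mul_g {x : ℕ} (hx : 1 ≤ x) : f x ≤ 3 * g x := by
  obtain rfl | two_le := hx.eq_or_lt
  · rw [f_one, g_one, mul_one]
  · linarith [f_le_two_mul_g two_le, g_nonneg x]

section Products

variable {ι : Type*} {s : Finset ι} {k : ι → ℕ}

lemma prod_three_mul_g (hk : ∀ j ∈ s, 1 ≤ k j) :
    ∏ j ∈ s, 3 * g (k j) = 3 ^ ∑ j ∈ s, k j := by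
  rw [← Finset.prod_pow_eq_pow_sum]
  exact Finset.prod_congr rfl fun j hj => three_mul_g (hk j hj)

lemma nine_mul_prod_g_le (hs : 2 ≤ s.card) (hk : ∀ j ∈ s, 1 ≤ k j) :
    9 * ∏ j ∈ s, g (k j) ≤ 3 ^ ∑ j ∈ s, k j := by
  have nine_le : (9 : ℝ) ≤ 3 ^ s.card := by
    calc (9 : ℝ) = 3 ^ 2 := by norm_num
      _ ≤ 3 ^ s.card := pow_le_pow_right₀ (by norm_num) hs
  calc 9 * ∏ j ∈ s, g (k j)
      ≤ 3 ^ s.card * ∏ j ∈ s, g (k j) :=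
        mul_le_mul_of_nonneg_right nine_le (Finset.prod_nonneg fun j _ => g_nonneg (k j))
    _ = ∏ j ∈ s, 3 * g (k j) := by rw [Finset.prod_mul_distrib, Finset.prod_const]
    _ = 3 ^ ∑ j ∈ s, k j := prod_three_mul_g hk

lemma three_mul_prod_f_le (hk : ∀ j ∈ s, 1 ≤ k j) (h : ∃ j ∈ s, 2 ≤ k j) :
    3 * ∏ j ∈ s, f (k j) ≤ 2 * 3 ^ ∑ j ∈ s, k j := by
  classical
  obtain ⟨j, hj, two_le⟩ := h
  have rest_le : ∏ l ∈ s.erase j, f (k l) ≤ ∏ l ∈ s.erase j, 3 * g (k l) :=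
    Finset.prod_le_prod (fun l _ => f_nonneg (k l))
      fun l hl => f_le_three_mul_g (hk l (Finset.mem_of_mem_erase hl))
  calc 3 * ∏ l ∈ s, f (k l)
      = 3 * (f (k j) * ∏ l ∈ s.erase j, f (k l)) := by
        rw [Finset.mul_prod_erase s (fun l => f (k l)) hj]
    _ ≤ 3 * (2 * g (k j) * ∏ l ∈ s.erase j, 3 * g (k l)) := by
        gcongr
        · exact Finset.prod_nonneg fun l _ => f_nonneg (k l)
        · exact mul_nonneg zero_le_two (g_nonneg (k j))
        · exact f_le_two_mul_g two_le
    _ = 2 * (3 * g (k j) * ∏ l ∈ s.erase j, 3 * g (k l)) := by ring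
    _ = 2 * 3 ^ ∑ l ∈ s, k l := by
        rw [Finset.mul_prod_erase s (fun l => 3 * g (k l)) hj, prod_three_mul_g hk]

lemma prod_f_add_two_mul_prod_g_le (hs : 2 ≤ s.card) (hk : ∀ j ∈ s, 1 ≤ k j) :
    ∏ j ∈ s, f (k j) + 2 * ∏ j ∈ s, g (k j) ≤ 3 ^ (∑ j ∈ s, k j) + 2 := by
  by_cases h : ∃ j ∈ s, 2 ≤ k j
  · have three_pow_pos : (0 : ℝ) < 3 ^ ∑ j ∈ s, k j := by positivity
    linarith [three_mul_prod_f_le hk h, nine_mul_prod_g_le hs hk]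
  · push Not at h
    have eq_one : ∀ j ∈ s, k j = 1 := fun j hj => by have := hk j hj; have := h j hj; lia
    have prod_f : ∏ j ∈ s, f (k j) = 3 ^ s.card :=
      Finset.prod_eq_pow_card fun j hj => by rw [eq_one j hj, f_one]
    have prod_g : ∏ j ∈ s, g (k j) = 1 :=
      Finset.prod_eq_one fun j hj => by rw [eq_one j hj, g_one]
    have sum_eq : ∑ j ∈ s, k j = s.card := by
      rw [Finset.sum_congr rfl eq_one, Finset.card_eq_sum_ones]
    rw [prod_f, prod_g, sum_eq, mul_one]

theorem prod_f_add_two_prod_g_lt_general (hs : 2 ≤ s.card) (hk : ∀ j ∈ s, 1 ≤ k j) :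
    ∏ j ∈ s, f (k j) + 2 * ∏ j ∈ s, g (k j) < f (∑ j ∈ s, k j) + 2 * g (∑ j ∈ s, k j) := by
  have two_le_sum : 2 ≤ ∑ j ∈ s, k j :=
    hs.trans (by simpa only [smul_eq_mul, mul_one] using s.card_nsmul_le_sum k 1 hk)
  have two_le_cast : (2 : ℝ) ≤ (∑ j ∈ s, k j : ℕ) := by exact_mod_cast two_le_sum
  rw [f_add_two_mul_g (one_le_two.trans two_le_sum)]
  linarith only [prod_f_add_two_mul_prod_g_le hs hk, two_le_cast]

end Products

theorem prod_f_add_two_prod_g_lt (i t : ℕ) (hi : 2 ≤ i)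
    (k : Fin i → ℕ) (hk : ∀ j, 1 ≤ k j) (ht : 1 ≤ t) (hsum : ∑ j, k j = t) :
    ∏ j, f (k j) + 2 * ∏ j, g (k j) < f t + 2 * g t := by
  subst hsum
  exact prod_f_add_two_prod_g_lt_general (by rwa [Finset.card_fin]) fun j _ => hk j
end
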